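/- Let n ≥ 2. The map sending a pure braid α ∈ UVP_n to its image in the abelianization UVP_n/[UVP_n, UVP_n] induces a well-defined bijection from the set of fused Markov equivalence classes of elements of UVP_n onto the set of orbits of the action of S_n on UVP_n/[UVP_n, UVP_n] induced by conjugation by s(π), π ∈ S_n. (This is the classification of n-component fused links: they are in one-to-one correspondence with elements of UVP_n/[UVP_n, UVP_n] up to conjugation by elements of S_n ≤ UVB_n.) -/

import Mathlib

/-!  Common setup: the unrestricted virtual braid group `UVB n`, its generators
σ_k, ρ_k (1-based indices), the elements λ_{i,j} and B_{i,j}, the permutation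
homomorphism ι (characterized by `IsIota`), the section s : S_n → UVB n
(characterized by `IsPermSection`), and fused Markov equivalence. -/

/-- Generators of the unrestricted virtual braid group `UVB n`:
`Sum.inl i` is the classical generator σ_{i+1} and `Sum.inr i` is the virtual
generator ρ_{i+1}, for `i : Fin (n-1)` (so the 1-based indices are `1, …, n-1`). -/
abbrev UVBGen (n : ℕ) := Sum (Fin (n - 1)) (Fin (n - 1))

namespace UVBGen
def sg {n : ℕ} (i : Fin (n - 1)) : FreeGroup (UVBGen n) := FreeGroup.of (Sum.inl i)
def rg {n : ℕ} (i : Fin (n - 1)) : FreeGroup (UVBGen n) := FreeGroup.of (Sum.inr i)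
end UVBGen

open UVBGen in
/-- The defining relations of the unrestricted virtual braid group. -/
def uvbRels (n : ℕ) : Set (FreeGroup (UVBGen n)) :=
  {r | (∃ i j : Fin (n - 1), (j : ℕ) = (i : ℕ) + 1 ∧
          (r = sg i * sg j * sg i * (sg j * sg i * sg j)⁻¹ ∨
           r = rg i * rg j * rg i * (rg j * rg i * rg j)⁻¹ ∨
           r = rg i * rg j * sg i * (sg j * rg i * rg j)⁻¹ ∨
           r = rg i * sg j * sg i * (sg j * sg i * rg j)⁻¹ ∨
           r = rg j * sg i * sg j * (sg i * sg j * rg i)⁻¹)) ∨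
       (∃ i j : Fin (n - 1), ((i : ℕ) + 2 ≤ (j : ℕ) ∨ (j : ℕ) + 2 ≤ (i : ℕ)) ∧
          (r = sg i * sg j * (sg j * sg i)⁻¹ ∨
           r = rg i * rg j * (rg j * rg i)⁻¹ ∨
           r = sg i * rg j * (rg j * sg i)⁻¹)) ∨
       (∃ i : Fin (n - 1), r = rg i * rg i)}

/-- The unrestricted virtual braid group on `n` strands. -/
abbrev UVB (n : ℕ) := PresentedGroup (uvbRels n)

namespace UVB

/-- The generator σ_k (1-based index; meaningful for `1 ≤ k ≤ n-1`, junk value `1` otherwise). -/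
def sigma (n k : ℕ) : UVB n :=
  if h : 1 ≤ k ∧ k ≤ n - 1 then PresentedGroup.of (Sum.inl ⟨k - 1, by omega⟩) else 1

/-- The generator ρ_k (1-based index; meaningful for `1 ≤ k ≤ n-1`, junk value `1` otherwise). -/
def rho (n k : ℕ) : UVB n :=
  if h : 1 ≤ k ∧ k ≤ n - 1 then PresentedGroup.of (Sum.inr ⟨k - 1, by omega⟩) else 1

/-- The element λ_{i,j} of `UVB n` (1-based indices `1 ≤ i ≠ j ≤ n`; junk value `1` if `i = j`).
For `i < j`:  `λ_{i,j} = ρ_{j-1}⋯ρ_{i+1} · ρ_i σ_i⁻¹ · ρ_{i+1}⋯ρ_{j-1}` and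
`λ_{j,i} = ρ_{j-1}⋯ρ_{i+1} · σ_i⁻¹ ρ_i · ρ_{i+1}⋯ρ_{j-1}`. -/
def lam (n i j : ℕ) : UVB n :=
  if i < j then
    (((List.range' (i + 1) (j - 1 - i)).reverse.map (rho n)).prod) *
      (rho n i * (sigma n i)⁻¹) *
      (((List.range' (i + 1) (j - 1 - i)).map (rho n)).prod)
  else if j < i then
    (((List.range' (j + 1) (i - 1 - j)).reverse.map (rho n)).prod) *
      ((sigma n j)⁻¹ * rho n j) *
      (((List.range' (j + 1) (i - 1 - j)).map (rho n)).prod)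
  else 1

/-- The element `B_{i,j} = ρ_{j-1}ρ_{j-2}⋯ρ_{i+1}ρ_i` for `i < j`, and `1` otherwise. -/
def B (n i j : ℕ) : UVB n :=
  if i < j then ((List.range' i (j - i)).reverse.map (rho n)).prod else 1

/-- The subgroup `U_j` of `UVB n` generated by `{λ_{i,j}, λ_{j,i} : 1 ≤ i < j}`. -/
def U (n j : ℕ) : Subgroup (UVB n) :=
  Subgroup.closure {x | ∃ i, 1 ≤ i ∧ i < j ∧ (x = lam n i j ∨ x = lam n j i)}

end UVB

/-- `ι : UVB n →* S_n` is the homomorphism sending σ_k and ρ_k to the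
transposition (k, k+1) (written 0-based on `Fin n`). -/
def IsIota (n : ℕ) (ι : UVB n →* Equiv.Perm (Fin n)) : Prop :=
  ∀ (k : ℕ) (h1 : 1 ≤ k) (h2 : k ≤ n - 1),
    ι (UVB.sigma n k) = Equiv.swap ⟨k - 1, by omega⟩ ⟨k, by omega⟩ ∧
    ι (UVB.rho n k) = Equiv.swap ⟨k - 1, by omega⟩ ⟨k, by omega⟩

/-- `s : S_n →* UVB n` is the homomorphism sending the transposition (k, k+1) to ρ_k. -/
def IsPermSection (n : ℕ) (s : Equiv.Perm (Fin n) →* UVB n) : Prop :=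
  ∀ (k : ℕ) (h1 : 1 ≤ k) (h2 : k ≤ n - 1),
    s (Equiv.swap ⟨k - 1, by omega⟩ ⟨k, by omega⟩) = UVB.rho n k

/-- The number of orbits of a permutation of `Fin n`
(= number of fixed points + number of nontrivial cycles). -/
def numOrbits {n : ℕ} (π : Equiv.Perm (Fin n)) : ℕ :=
  (Finset.univ.filter fun x => π x = x).card + π.cycleType.card

namespace UVB

private def embedGen (n : ℕ) : UVBGen n → UVBGen (n + 1)
  | Sum.inl i => Sum.inl ⟨i.val, by have := i.isLt; omega⟩
  | Sum.inr i => Sum.inr ⟨i.val, by have := i.isLt; omega⟩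

open UVBGen in
/-- The natural inclusion `UVB n →* UVB (n+1)` (σ_k ↦ σ_k, ρ_k ↦ ρ_k). -/
def incl (n : ℕ) : UVB n →* UVB (n + 1) :=
  PresentedGroup.toGroup (f := fun x => PresentedGroup.of (embedGen n x)) (by
    have key : (FreeGroup.lift fun x => (PresentedGroup.of (embedGen n x) : UVB (n + 1)))
        = (PresentedGroup.mk (uvbRels (n + 1))).comp (FreeGroup.map (embedGen n)) := by
      ext x
      simp [PresentedGroup.of]
    intro r hr
    rw [key]
    simp only [MonoidHom.comp_apply]
    have hmem : FreeGroup.map (embedGen n) r ∈ uvbRels (n + 1) := by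
      have hsg : ∀ i : Fin (n - 1), FreeGroup.map (embedGen n) (sg i)
          = sg (⟨i.val, by have := i.isLt; omega⟩ : Fin (n + 1 - 1)) := by
        intro i; simp [sg, embedGen]
      have hrg : ∀ i : Fin (n - 1), FreeGroup.map (embedGen n) (rg i)
          = rg (⟨i.val, by have := i.isLt; omega⟩ : Fin (n + 1 - 1)) := by
        intro i; simp [rg, embedGen]
      rcases hr with ⟨i, j, hij, hc⟩ | ⟨i, j, hij, hc⟩ | ⟨i, hc⟩
      · refine Or.inl ⟨⟨i.val, by have := i.isLt; omega⟩, ⟨j.val, by have := j.isLt; omega⟩,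
          by simpa using hij, ?_⟩
        rcases hc with h | h | h | h | h <;> subst h <;>
          simp only [map_mul, map_inv, hsg, hrg] <;> tauto
      · refine Or.inr (Or.inl ⟨⟨i.val, by have := i.isLt; omega⟩, ⟨j.val, by have := j.isLt; omega⟩,
          by simpa using hij, ?_⟩)
        rcases hc with h | h | h <;> subst h <;>
          simp only [map_mul, map_inv, hsg, hrg] <;> tauto
      · refine Or.inr (Or.inr ⟨⟨i.val, by have := i.isLt; omega⟩, ?_⟩)
        subst hc
        simp only [map_mul, hsg, hrg]
    exact (QuotientGroup.eq_one_iff _).mpr (Subgroup.subset_normalClosure hmem))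

end UVB

/-- The elementary fused Markov moves on the disjoint union of the groups `UVB n`:
conjugation, and the three right stabilizations (positive, negative, virtual). -/
inductive MarkovBase : (Σ n, UVB n) → (Σ n, UVB n) → Prop
  | conj (n : ℕ) (α γ : UVB n) : MarkovBase ⟨n, α⟩ ⟨n, γ * α * γ⁻¹⟩
  | stabPos (n : ℕ) (α : UVB n) :
      MarkovBase ⟨n, α⟩ ⟨n + 1, UVB.incl n α * UVB.sigma (n + 1) n⟩
  | stabNeg (n : ℕ) (α : UVB n) :
      MarkovBase ⟨n, α⟩ ⟨n + 1, UVB.incl n α * (UVB.sigma (n + 1) n)⁻¹⟩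
  | stabVirt (n : ℕ) (α : UVB n) :
      MarkovBase ⟨n, α⟩ ⟨n + 1, UVB.incl n α * UVB.rho (n + 1) n⟩

/-- Fused Markov equivalence: the smallest equivalence relation generated by the
elementary Markov moves.  By Kamada's theorem, two unrestricted virtual braids are
fused Markov equivalent iff their closures are equivalent fused links. -/
def Markov : (Σ n, UVB n) → (Σ n, UVB n) → Prop := Relation.EqvGen MarkovBase

/-! The elements `λ_{i,j}` generate the pure subgroup `UVP m`, the permutations `ρ_π` permute them
by acting on the indices, and they commute except for the pairs `λ_{i,j}`, `λ_{j,i}`.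

Markov moves kill these last commutators. If `c` is pure, sliding generators along the permutation
of a twice stabilized braid turns `c λ_{i,j} λ_{j,i}` into `c λ_{j,i} λ_{i,j}`: the pure generators
involving a strand added by stabilization commute with `c`, so the factors of a product
`λ_{i,p} λ_{p,i}` on a new strand `p` can be separated by conjugation. Hence elements of `UVP m`
congruent modulo `[UVP m, UVP m]` are Markov equivalent.

Conversely, let `l : X → X → M` take values in an abelian group. Giving `λ_{i,j}` the value
`l (f i) (f j)`, for a colouring `f` of the strands by `X`, defines a crossed homomorphism on
`UVB m`. When `l x x = 1`, its values over the surjective colourings that are constant on the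
components of the closure form a Markov invariant. For the classes of the `λ_{i,j}` in
`UVP n / [UVP n, UVP n]`, coloured by the strands themselves, the surjective colourings are the
permutations, and the invariant is the `S_n`-orbit of the class of the braid. -/

open Equiv MulAction

section Permutations

theorem viaEmbedding_swap {α β : Type*} [DecidableEq α] [DecidableEq β] (e : α ↪ β) (a b : α) :
    (swap a b).viaEmbedding e = swap (e a) (e b) := by
  ext y
  by_cases hy : y ∈ Set.range e
  · obtain ⟨x, rfl⟩ := hy
    rw [Perm.viaEmbedding_apply, e.injective.map_swap]
  · rw [Perm.viaEmbedding_apply_of_notMem _ _ _ hy,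
      swap_apply_of_ne_of_ne (fun h => hy ⟨a, h.symm⟩) (fun h => hy ⟨b, h.symm⟩)]

theorem viaEmbedding_castSucc {m : ℕ} (π : Perm (Fin m)) (i : Fin m) :
    π.viaEmbedding Fin.castSuccEmb i.castSucc = (π i).castSucc :=
  Perm.viaEmbedding_apply π Fin.castSuccEmb i

theorem viaEmbedding_last {m : ℕ} (π : Perm (Fin m)) :
    π.viaEmbedding Fin.castSuccEmb (Fin.last m) = Fin.last m :=
  Perm.viaEmbedding_apply_of_notMem _ _ _ fun ⟨i, hi⟩ => Fin.castSucc_ne_last i hi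

theorem exists_perm_val_eq {m k : ℕ} {v : Fin k → Fin m} (hv : Function.Injective v) :
    ∃ π : Perm (Fin m), ∀ i, (π (v i) : ℕ) = i := by
  have hk : k ≤ m := by simpa using Fintype.card_le_of_injective v hv
  obtain ⟨π, hπ⟩ := (Perm.isMultiplyPretransitive (Fin m) k).exists_smul_eq
    ⟨v, hv⟩ (Fin.castLEEmb hk)
  exact ⟨π, fun i => congrArg Fin.val (DFunLike.congr_fun hπ i)⟩

/-- The transpositions of two consecutive elements of `Fin m`, none of them below `k`. -/
def adjacentSwaps (m k : ℕ) : Set (Perm (Fin m)) :=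
  {τ | ∃ a b : Fin m, k ≤ a ∧ (b : ℕ) = a + 1 ∧ τ = swap a b}

theorem isSwap_of_mem_adjacentSwaps {m k : ℕ} {τ : Perm (Fin m)} (hτ : τ ∈ adjacentSwaps m k) :
    τ.IsSwap := by
  obtain ⟨a, b, -, hab, rfl⟩ := hτ
  exact ⟨a, b, by omega, rfl⟩

theorem mem_orbit_closure_adjacentSwaps {m k : ℕ} {a b : Fin m} (ha : k ≤ a) (hab : a ≤ b) :
    b ∈ orbit (Subgroup.closure (adjacentSwaps m k)) a := by
  obtain ⟨b, hb⟩ := b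
  induction b with
  | zero =>
    obtain rfl : a = ⟨0, hb⟩ := le_antisymm hab (Nat.zero_le _)
    exact mem_orbit_self _
  | succ b ih =>
    rcases hab.eq_or_lt with rfl | hlt
    · exact mem_orbit_self _
    · have hab' : (a : ℕ) ≤ b := Nat.lt_succ_iff.1 hlt
      have hswap : swap ⟨b, by omega⟩ ⟨b + 1, hb⟩ ∈ Subgroup.closure (adjacentSwaps m k) :=
        Subgroup.subset_closure ⟨_, _, ha.trans hab', rfl, rfl⟩
      convert mem_orbit_of_mem_orbit
        (⟨_, hswap⟩ : Subgroup.closure (adjacentSwaps m k)) (ih (by omega) hab') using 1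
      exact (swap_apply_left _ _).symm

theorem mem_closure_adjacentSwaps {m k : ℕ} {π : Perm (Fin m)}
    (hπ : ∀ x : Fin m, (x : ℕ) < k → π x = x) :
    π ∈ Subgroup.closure (adjacentSwaps m k) := by
  rw [mem_closure_isSwap fun τ => isSwap_of_mem_adjacentSwaps]
  refine ⟨Set.toFinite _, fun x => ?_⟩
  rcases lt_or_ge (x : ℕ) k with hx | hx
  · exact (hπ x hx).symm ▸ mem_orbit_self x
  · have hπx : k ≤ (π x : ℕ) := by
      by_contra! hlt
      rw [π.injective (hπ _ hlt)] at hlt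
      exact hlt.not_ge hx
    rcases le_total x (π x) with h | h
    · exact mem_orbit_closure_adjacentSwaps hx h
    · exact mem_orbit_symm.1 (mem_orbit_closure_adjacentSwaps hπx h)

theorem closure_adjacentSwaps_zero (m : ℕ) : Subgroup.closure (adjacentSwaps m 0) = ⊤ :=
  eq_top_iff.2 fun _ _ => mem_closure_adjacentSwaps fun _ hx => absurd hx (Nat.not_lt_zero _)

theorem perm_hom_ext {m : ℕ} {G : Type*} [Group G] {s t : Perm (Fin m) →* G}
    (h : ∀ a b : Fin m, (b : ℕ) = a + 1 → s (swap a b) = t (swap a b)) : s = t := by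
  refine MonoidHom.eq_of_eqOn_dense (closure_adjacentSwaps_zero m) ?_
  rintro _ ⟨a, b, -, hab, rfl⟩
  exact h a b hab

end Permutations

section Coxeter

variable {G H : Type*} [Group G] [Group H]

/-- The first `m` terms of `x` satisfy the Coxeter relations of the consecutive transpositions of
`m + 1` points. -/
structure IsCoxeterFamily (x : ℕ → G) (m : ℕ) : Prop where
  mul_self : ∀ i < m, x i * x i = 1
  braid : ∀ i, i + 1 < m → x i * x (i + 1) * x i = x (i + 1) * x i * x (i + 1)
  commute : ∀ i j, i + 2 ≤ j → j < m → Commute (x i) (x j)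

/-- The descending product `x (k + d - 1) * ⋯ * x (k + 1) * x k`. -/
def descProd (x : ℕ → G) (k : ℕ) : ℕ → G
  | 0 => 1
  | d + 1 => x (k + d) * descProd x k d

theorem descProd_succ' (x : ℕ → G) (k d : ℕ) :
    descProd x k (d + 1) = descProd x (k + 1) d * x k := by
  induction d with
  | zero => simp [descProd]
  | succ d ih =>
    calc x (k + (d + 1)) * descProd x k (d + 1)
        = x (k + (d + 1)) * (descProd x (k + 1) d * x k) := by rw [ih]
      _ = descProd x (k + 1) (d + 1) * x k := by
        rw [descProd, mul_assoc, add_right_comm k 1 d, add_assoc k d 1]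

theorem map_descProd_apply {x : ℕ → G} {φ : G →* Perm ℕ} {k d : ℕ}
    (hφ : ∀ i < k + d, φ (x i) = swap i (i + 1)) : φ (descProd x k d) k = k + d := by
  induction d with
  | zero => rw [descProd, map_one, Perm.one_apply, add_zero]
  | succ d ih =>
    rw [descProd, map_mul, Perm.mul_apply, ih fun i hi => hφ i (by omega), hφ _ (by omega),
      swap_apply_left, add_assoc]

namespace IsCoxeterFamily

variable {x : ℕ → G} {m k d l : ℕ}

theorem mono {m' : ℕ} (hx : IsCoxeterFamily x m) (h : m' ≤ m) : IsCoxeterFamily x m' where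
  mul_self i hi := hx.mul_self i (hi.trans_le h)
  braid i hi := hx.braid i (hi.trans_le h)
  commute i j hij hj := hx.commute i j hij (hj.trans_le h)

theorem prodMk {y : ℕ → H} (hx : IsCoxeterFamily x m) (hy : IsCoxeterFamily y m) :
    IsCoxeterFamily (fun i => (x i, y i)) m where
  mul_self i hi := Prod.ext (hx.mul_self i hi) (hy.mul_self i hi)
  braid i hi := Prod.ext (hx.braid i hi) (hy.braid i hi)
  commute i j hij hj := (hx.commute i j hij hj).prod (hy.commute i j hij hj)

theorem commute_descProd_of_lt (hx : IsCoxeterFamily x m) (hl : l + 2 ≤ k) (hd : k + d ≤ m) :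
    Commute (descProd x k d) (x l) := by
  induction d with
  | zero => exact Commute.one_left _
  | succ d ih =>
    exact (hx.commute l (k + d) (by omega) (by omega)).symm.mul_left (ih (by omega))

theorem commute_descProd_of_gt (hx : IsCoxeterFamily x m) (hl : k + d < l) (hlm : l < m) :
    Commute (descProd x k d) (x l) := by
  induction d with
  | zero => exact Commute.one_left _
  | succ d ih => exact (hx.commute (k + d) l (by omega) hlm).mul_left (ih (by omega))

theorem descProd_mul_succ (hx : IsCoxeterFamily x m) (hkl : k ≤ l) (hl : l + 1 < k + d)
    (hd : k + d ≤ m) : descProd x k d * x (l + 1) = x l * descProd x k d := by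
  induction d with
  | zero => omega
  | succ d ih =>
    rcases Nat.lt_or_ge (l + 1) (k + d) with h | h
    · rw [descProd, mul_assoc, ih h (by omega), ← mul_assoc, ← mul_assoc,
        (hx.commute l (k + d) (by omega) (by omega)).eq]
    · obtain ⟨e, rfl⟩ : ∃ e, d = e + 1 := ⟨d - 1, by omega⟩
      obtain rfl : l = k + e := by omega
      have hcomm : descProd x k e * x (k + e + 1) = x (k + e + 1) * descProd x k e :=
        hx.commute_descProd_of_gt (by omega) (by omega)
      calc x (k + e + 1) * (x (k + e) * descProd x k e) * x (k + e + 1)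
          = x (k + e + 1) * x (k + e) * (descProd x k e * x (k + e + 1)) := by
            simp only [mul_assoc]
        _ = x (k + e + 1) * x (k + e) * x (k + e + 1) * descProd x k e := by
            rw [hcomm, mul_assoc, mul_assoc, mul_assoc]
        _ = x (k + e) * (x (k + e + 1) * (x (k + e) * descProd x k e)) := by
            rw [← hx.braid _ (by omega), mul_assoc, mul_assoc]

theorem exists_mul_descProd (hx : IsCoxeterFamily x (m + 1)) {g : G}
    (hg : g ∈ Subgroup.closure (x '' Set.Iio (m + 1))) :
    ∃ h ∈ Subgroup.closure (x '' Set.Iio m), ∃ k d, k + d = m + 1 ∧ g = h * descProd x k d := by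
  have mul_gen : ∀ a : G,
      (∃ h ∈ Subgroup.closure (x '' Set.Iio m), ∃ k d, k + d = m + 1 ∧ a = h * descProd x k d) →
      ∀ l < m + 1, ∃ h ∈ Subgroup.closure (x '' Set.Iio m), ∃ k d, k + d = m + 1 ∧
        a * x l = h * descProd x k d := by
    rintro _ ⟨h, hh, k, d, hkd, rfl⟩ l hl
    have mul_mem_closure : ∀ i < m, h * x i ∈ Subgroup.closure (x '' Set.Iio m) := fun i hi =>
      mul_mem hh (Subgroup.subset_closure ⟨i, hi, rfl⟩)
    rcases lt_trichotomy (l + 1) k with hlk | rfl | hlk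
    · exact ⟨h * x l, mul_mem_closure l (by omega), k, d, hkd, by
        rw [mul_assoc, hx.commute_descProd_of_lt hlk hkd.le, mul_assoc]⟩
    · exact ⟨h, hh, l, d + 1, by omega, by rw [descProd_succ', mul_assoc]⟩
    · rcases (Nat.lt_succ_iff.1 hlk).eq_or_lt with rfl | hkl
      · obtain ⟨e, rfl⟩ : ∃ e, d = e + 1 := ⟨d - 1, by omega⟩
        exact ⟨h, hh, k + 1, e, by omega, by
          rw [descProd_succ', mul_assoc, mul_assoc, hx.mul_self k hl, mul_one]⟩
      · obtain ⟨l, rfl⟩ : ∃ l', l = l' + 1 := ⟨l - 1, by omega⟩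
        exact ⟨h * x l, mul_mem_closure l (by omega), k, d, hkd, by
          rw [mul_assoc, hx.descProd_mul_succ (by omega) (by omega) hkd.le, mul_assoc]⟩
  induction hg using Subgroup.closure_induction_right with
  | one => exact ⟨1, one_mem _, m + 1, 0, rfl, (one_mul 1).symm⟩
  | mul_right a _ y hy ih =>
    obtain ⟨i, hi, rfl⟩ := hy
    exact mul_gen a ih i hi
  | mul_inv_cancel a _ y hy ih =>
    obtain ⟨i, hi, rfl⟩ := hy
    rw [inv_eq_of_mul_eq_one_left (hx.mul_self i hi)]
    exact mul_gen a ih i hi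

/-- An element `h * descProd x k d` acting trivially on `k` has `d = 0`, since `h` fixes `m + 1`. -/
theorem eq_one_of_map_eq_one (hx : IsCoxeterFamily x m) {φ : G →* Perm ℕ}
    (hφ : ∀ i < m, φ (x i) = swap i (i + 1)) {g : G}
    (hg : g ∈ Subgroup.closure (x '' Set.Iio m)) (hφg : φ g = 1) : g = 1 := by
  induction m generalizing g with
  | zero => simpa using hg
  | succ m ih =>
    obtain ⟨h, hh, k, d, hkd, rfl⟩ := hx.exists_mul_descProd hg
    have hfix : φ h (m + 1) = m + 1 := by
      have hle : Subgroup.closure (x '' Set.Iio m) ≤ (stabilizer (Perm ℕ) (m + 1)).comap φ := by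
        rw [Subgroup.closure_le]
        rintro _ ⟨i, hi : i < m, rfl⟩
        rw [SetLike.mem_coe, Subgroup.mem_comap, hφ i (by omega)]
        exact swap_apply_of_ne_of_ne (by omega) (by omega)
      exact hle hh
    have hkm : k = m + 1 := by
      have hk := DFunLike.congr_fun hφg k
      rw [map_mul, Perm.mul_apply, map_descProd_apply fun i hi => hφ i (by omega), hkd, hfix] at hk
      exact hk.symm
    obtain rfl : d = 0 := by omega
    rw [descProd, mul_one] at hφg ⊢
    exact ih (hx.mono m.le_succ) (fun i hi => hφ i (by omega)) hh hφg

end IsCoxeterFamily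

theorem isCoxeterFamily_swap (m : ℕ) : IsCoxeterFamily (fun i => (swap i (i + 1) : Perm ℕ)) m where
  mul_self i _ := swap_mul_self i (i + 1)
  braid i _ := by
    rw [swap_mul_swap_mul_swap (by omega) (by omega), swap_comm i (i + 1),
      swap_comm (i + 1) (i + 1 + 1), swap_mul_swap_mul_swap (by omega) (by omega), swap_comm]
  commute i j hij _ := (Perm.disjoint_swap_swap (by simp; omega)).commute

/-- The subgroup of `G × Perm (Fin (m + 1))` generated by the pairs `(r i, swap i (i + 1))` is the
graph of the homomorphism, because by `eq_one_of_map_eq_one` it projects injectively to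
`Perm (Fin (m + 1))`. -/
theorem IsCoxeterFamily.exists_monoidHom {r : ℕ → G} {m : ℕ} (hr : IsCoxeterFamily r m) :
    ∃ s : Perm (Fin (m + 1)) →* G,
      ∀ a b : Fin (m + 1), (b : ℕ) = a + 1 → s (swap a b) = r a := by
  let extend : Perm (Fin (m + 1)) →* Perm ℕ := Perm.viaEmbeddingHom Fin.valEmbedding
  let T : Set (Perm (Fin (m + 1)) × G) :=
    {y | ∃ a b : Fin (m + 1), (b : ℕ) = a + 1 ∧ y = (swap a b, r a)}
  have extend_swap : ∀ a b : Fin (m + 1), (b : ℕ) = a + 1 →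
      extend (swap a b) = swap (a : ℕ) (a + 1) := fun a b hab => by
    rw [← hab]
    exact viaEmbedding_swap Fin.valEmbedding a b
  have hinj : Function.Injective
      ((MonoidHom.fst _ G).comp (Subgroup.closure T).subtype) := by
    rw [injective_iff_map_eq_one]
    rintro ⟨⟨π, g⟩, hg⟩ (rfl : π = 1)
    have hmem : ((1 : Perm ℕ), g) ∈ Subgroup.closure
        ((fun i => ((swap i (i + 1) : Perm ℕ), r i)) '' Set.Iio m) := by
      have hmap := Subgroup.mem_map_of_mem (extend.prodMap (MonoidHom.id G)) hg
      rw [MonoidHom.map_closure] at hmap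
      have hle : extend.prodMap (MonoidHom.id G) '' T ⊆
          (fun i => ((swap i (i + 1) : Perm ℕ), r i)) '' Set.Iio m := by
        rintro _ ⟨_, ⟨a, b, hab, rfl⟩, rfl⟩
        exact ⟨a, show (a : ℕ) < m by omega, by simp [extend_swap a b hab]⟩
      simpa using Subgroup.closure_mono hle hmap
    have h1 := ((isCoxeterFamily_swap m).prodMk hr).eq_one_of_map_eq_one
      (φ := MonoidHom.fst _ G) (fun _ _ => rfl) hmem rfl
    exact Subtype.ext (Prod.ext rfl (Prod.ext_iff.1 h1).2)
  have hsurj : Function.Surjective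
      ((MonoidHom.fst _ G).comp (Subgroup.closure T).subtype) := by
    rw [← MonoidHom.range_eq_top, eq_top_iff, ← closure_adjacentSwaps_zero, Subgroup.closure_le]
    rintro _ ⟨a, b, -, hab, rfl⟩
    exact ⟨⟨(swap a b, r a), Subgroup.subset_closure ⟨a, b, hab, rfl⟩⟩, rfl⟩
  obtain ⟨s, hs⟩ := Subgroup.exists_eq_graph (G := Subgroup.closure T) ⟨hinj, hsurj⟩
  refine ⟨s, fun a b hab => ?_⟩
  have hmem : (swap a b, r a) ∈ s.graph := hs ▸ Subgroup.subset_closure ⟨a, b, hab, rfl⟩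
  exact MonoidHom.mem_graph.1 hmem

end Coxeter

namespace UVB

section Relations

variable {m k l : ℕ}

theorem sigma_eq_mk (hk : 1 ≤ k) (hkm : k < m) :
    sigma m k = PresentedGroup.mk (uvbRels m) (UVBGen.sg ⟨k - 1, by omega⟩) :=
  dif_pos ⟨hk, by omega⟩

theorem rho_eq_mk (hk : 1 ≤ k) (hkm : k < m) :
    rho m k = PresentedGroup.mk (uvbRels m) (UVBGen.rg ⟨k - 1, by omega⟩) :=
  dif_pos ⟨hk, by omega⟩

theorem sigma_braid (hk : 1 ≤ k) (hkm : k + 1 < m) :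
    sigma m k * sigma m (k + 1) * sigma m k = sigma m (k + 1) * sigma m k * sigma m (k + 1) := by
  simp only [sigma_eq_mk hk (by omega : k < m), sigma_eq_mk k.succ_pos hkm, ← map_mul]
  exact PresentedGroup.mk_eq_mk_of_mul_inv_mem (.inl ⟨_, _, by grind, .inl rfl⟩)

theorem rho_braid (hk : 1 ≤ k) (hkm : k + 1 < m) :
    rho m k * rho m (k + 1) * rho m k = rho m (k + 1) * rho m k * rho m (k + 1) := by
  simp only [rho_eq_mk hk (by omega : k < m), rho_eq_mk k.succ_pos hkm, ← map_mul]
  exact PresentedGroup.mk_eq_mk_of_mul_inv_mem (.inl ⟨_, _, by grind, .inr (.inl rfl)⟩)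

theorem rho_mul_rho_mul_sigma (hk : 1 ≤ k) (hkm : k + 1 < m) :
    rho m k * rho m (k + 1) * sigma m k = sigma m (k + 1) * rho m k * rho m (k + 1) := by
  simp only [sigma_eq_mk hk (by omega : k < m), sigma_eq_mk k.succ_pos hkm,
    rho_eq_mk hk (by omega : k < m), rho_eq_mk k.succ_pos hkm, ← map_mul]
  exact PresentedGroup.mk_eq_mk_of_mul_inv_mem (.inl ⟨_, _, by grind, .inr (.inr (.inl rfl))⟩)

theorem rho_mul_sigma_succ_mul_sigma (hk : 1 ≤ k) (hkm : k + 1 < m) :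
    rho m k * sigma m (k + 1) * sigma m k = sigma m (k + 1) * sigma m k * rho m (k + 1) := by
  simp only [sigma_eq_mk hk (by omega : k < m), sigma_eq_mk k.succ_pos hkm,
    rho_eq_mk hk (by omega : k < m), rho_eq_mk k.succ_pos hkm, ← map_mul]
  exact PresentedGroup.mk_eq_mk_of_mul_inv_mem
    (.inl ⟨_, _, by grind, .inr (.inr (.inr (.inl rfl)))⟩)

theorem rho_succ_mul_sigma_mul_sigma (hk : 1 ≤ k) (hkm : k + 1 < m) :
    rho m (k + 1) * sigma m k * sigma m (k + 1) = sigma m k * sigma m (k + 1) * rho m k := by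
  simp only [sigma_eq_mk hk (by omega : k < m), sigma_eq_mk k.succ_pos hkm,
    rho_eq_mk hk (by omega : k < m), rho_eq_mk k.succ_pos hkm, ← map_mul]
  exact PresentedGroup.mk_eq_mk_of_mul_inv_mem
    (.inl ⟨_, _, by grind, .inr (.inr (.inr (.inr rfl)))⟩)

theorem commute_sigma_sigma (hk : 1 ≤ k) (hkl : k + 2 ≤ l) (hl : l < m) :
    Commute (sigma m k) (sigma m l) := by
  simp only [Commute, SemiconjBy, sigma_eq_mk hk (by omega : k < m),
    sigma_eq_mk (by omega : 1 ≤ l) hl, ← map_mul]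
  exact PresentedGroup.mk_eq_mk_of_mul_inv_mem (.inr (.inl ⟨_, _, .inl (by grind), .inl rfl⟩))

theorem commute_rho_rho (hk : 1 ≤ k) (hkl : k + 2 ≤ l) (hl : l < m) :
    Commute (rho m k) (rho m l) := by
  simp only [Commute, SemiconjBy, rho_eq_mk hk (by omega : k < m),
    rho_eq_mk (by omega : 1 ≤ l) hl, ← map_mul]
  exact PresentedGroup.mk_eq_mk_of_mul_inv_mem
    (.inr (.inl ⟨_, _, .inl (by grind), .inr (.inl rfl)⟩))

theorem commute_sigma_rho (hk : 1 ≤ k) (hkl : k + 2 ≤ l) (hl : l < m) :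
    Commute (sigma m k) (rho m l) := by
  simp only [Commute, SemiconjBy, sigma_eq_mk hk (by omega : k < m),
    rho_eq_mk (by omega : 1 ≤ l) hl, ← map_mul]
  exact PresentedGroup.mk_eq_mk_of_mul_inv_mem
    (.inr (.inl ⟨_, _, .inl (by grind), .inr (.inr rfl)⟩))

theorem rho_mul_self (hk : 1 ≤ k) (hkm : k < m) : rho m k * rho m k = 1 := by
  rw [rho_eq_mk hk hkm, ← map_mul]
  exact PresentedGroup.one_of_mem (.inr (.inr ⟨_, rfl⟩))

theorem isCoxeterFamily_rho (m : ℕ) : IsCoxeterFamily (fun i => rho (m + 1) (i + 1)) m where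
  mul_self i hi := rho_mul_self i.succ_pos (by omega)
  braid i hi := rho_braid i.succ_pos (by omega)
  commute i j hij hj := commute_rho_rho i.succ_pos (by omega) (by omega)

/-- Indexing the generators by consecutive strands `a`, `b` avoids the truncated `m - 1`. -/
theorem eq_top_of_generators_mem {S : Subgroup (UVB m)}
    (hσ : ∀ a b : Fin m, (b : ℕ) = a + 1 → sigma m b ∈ S)
    (hρ : ∀ a b : Fin m, (b : ℕ) = a + 1 → rho m b ∈ S) : S = ⊤ := by
  rw [eq_top_iff, ← PresentedGroup.closure_range_of, Subgroup.closure_le]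
  rintro _ ⟨i | i, rfl⟩
  · have := hσ ⟨i, by omega⟩ ⟨i + 1, by omega⟩ rfl
    rwa [sigma_eq_mk (by simp) (by grind)] at this
  · have := hρ ⟨i, by omega⟩ ⟨i + 1, by omega⟩ rfl
    rwa [rho_eq_mk (by simp) (by grind)] at this

theorem hom_ext {G : Type*} [Group G] {f g : UVB m →* G}
    (hσ : ∀ a b : Fin m, (b : ℕ) = a + 1 → f (sigma m b) = g (sigma m b))
    (hρ : ∀ a b : Fin m, (b : ℕ) = a + 1 → f (rho m b) = g (rho m b)) : f = g := by
  have htop : f.eqLocus g = ⊤ := eq_top_of_generators_mem hσ hρ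
  exact MonoidHom.eq_of_eqOn_top fun x _ => (htop ▸ Subgroup.mem_top x : x ∈ f.eqLocus g)

end Relations

section PermSection

variable {m : ℕ} {a b : Fin m}

theorem exists_permSection (m : ℕ) : ∃ s : Perm (Fin m) →* UVB m,
    ∀ a b : Fin m, (b : ℕ) = a + 1 → s (swap a b) = rho m b := by
  cases m with
  | zero => exact ⟨1, fun a => a.elim0⟩
  | succ m =>
    obtain ⟨s, hs⟩ := (isCoxeterFamily_rho m).exists_monoidHom
    exact ⟨s, fun a b hab => by rw [hs a b hab, hab]⟩

/-- The section of `UVB m → S_m` sending the transposition `(k, k+1)` to `ρ_k`. -/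
noncomputable def permSection (m : ℕ) : Perm (Fin m) →* UVB m := (exists_permSection m).choose

theorem permSection_swap (hab : (b : ℕ) = a + 1) : permSection m (swap a b) = rho m b :=
  (exists_permSection m).choose_spec a b hab

end PermSection

end UVB

theorem IsPermSection.eq_permSection {n : ℕ} {s : Perm (Fin n) →* UVB n}
    (hs : IsPermSection n s) : s = UVB.permSection n := by
  refine perm_hom_ext fun a b hab => ?_
  have hb := hs b (by omega) (by omega)
  rw [UVB.permSection_swap hab, ← hb]
  congr
  grind

section Words

variable {G : Type*} [Group G] {a b c q r : G}

theorem mul_crossing_eq_iff_commute (hqa : SemiconjBy q a b) (hrb : SemiconjBy r b c)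
    (hrc : SemiconjBy r c b) (hrq : r * q * r = q * r * q) :
    r * (c * q) * (a * r) = c * q * (a * r) * q ↔ Commute b c := by
  have hleft : r * (c * q) * (a * r) = b * c * (r * q * r) := by
    calc r * (c * q) * (a * r) = r * c * (q * a) * r := by group
      _ = b * (r * b) * q * r := by rw [hrc.eq, hqa.eq]; group
      _ = b * c * (r * q * r) := by rw [hrb.eq]; group
  have hright : c * q * (a * r) * q = c * b * (q * r * q) := by
    calc c * q * (a * r) * q = c * (q * a) * r * q := by group
      _ = c * b * (q * r * q) := by rw [hqa.eq]; group
  rw [hleft, hright, hrq, mul_left_inj, commute_iff_eq]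

theorem crossing_braid_iff_commute (hqa : SemiconjBy q a b) (hqb : SemiconjBy q b a)
    (hrb : SemiconjBy r b c) (hrc : SemiconjBy r c b) (hrq : r * q * r = q * r * q)
    (hab : Commute a b) (hbc : Commute b c) :
    a * r * (c * q) * (a * r) = c * q * (a * r) * (c * q) ↔ Commute a c := by
  have hleft : a * r * (c * q) * (a * r) = b * (a * c) * (r * q * r) := by
    calc a * r * (c * q) * (a * r) = a * (r * c) * (q * a) * r := by group
      _ = a * b * (r * b) * q * r := by rw [hrc.eq, hqa.eq]; group
      _ = b * (a * c) * (r * q * r) := by rw [hrb.eq, hab.eq]; group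
  have hright : c * q * (a * r) * (c * q) = b * (c * a) * (q * r * q) := by
    calc c * q * (a * r) * (c * q) = c * (q * a) * (r * c) * q := by group
      _ = c * b * (q * b) * r * q := by rw [hqa.eq, hrc.eq]; group
      _ = b * (c * a) * (q * r * q) := by rw [hqb.eq, ← hbc.eq]; group
  rw [hleft, hright, hrq, mul_left_inj, mul_right_inj, commute_iff_eq]

end Words

/-- A family `l` of elements of `G`, indexed by ordered pairs of strands, is permuted by the
elements `s π` in the way they permute the strands. -/
def IsEquivariant {α G : Type*} [Group G] (s : Perm α →* G) (l : α → α → G) : Prop :=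
  ∀ π i j, SemiconjBy (s π) (l i j) (l (π i) (π j))

theorem IsEquivariant.commute_iff {α G : Type*} [Group G] {s : Perm α →* G} {l : α → α → G}
    (hl : IsEquivariant s l) (π : Perm α) {i j k k' : α} :
    Commute (l (π i) (π j)) (l (π k) (π k')) ↔ Commute (l i j) (l k k') := by
  rw [eq_mul_inv_of_mul_eq (hl π i j).symm, eq_mul_inv_of_mul_eq (hl π k k').symm,
    Commute.conj_iff]

section Crossing

variable {α G : Type*} [DecidableEq α] [Group G]

/-- The crossing `(λ_{i,j})⁻¹ ρ_{i,j}` of the strands `i` and `j`; for `j = i + 1` it is the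
generator `σ_{i+1}`. -/
def crossing (s : Perm α →* G) (l : α → α → G) (i j : α) : G := (l i j)⁻¹ * s (swap i j)

theorem map_swap_braid (s : Perm α →* G) {i j k : α} (hij : i ≠ j) (hik : i ≠ k) (hjk : j ≠ k) :
    s (swap i j) * s (swap j k) * s (swap i j) = s (swap j k) * s (swap i j) * s (swap j k) := by
  rw [← map_mul, ← map_mul, ← map_mul, ← map_mul, swap_mul_swap_mul_swap hij hik,
    swap_comm i j, swap_comm j k, swap_mul_swap_mul_swap hjk.symm hik.symm, swap_comm]

theorem map_swap_mul_inv_crossing (s : Perm α →* G) (l : α → α → G) (i j : α) :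
    s (swap i j) * (crossing s l i j)⁻¹ = l i j := by
  rw [crossing, mul_inv_rev, inv_inv, mul_inv_cancel_left]

namespace IsEquivariant

variable {s : Perm α →* G} {l : α → α → G} {i j k k' : α}

theorem semiconj_crossing (hl : IsEquivariant s l) (π : Perm α) (i j : α) :
    SemiconjBy (s π) (crossing s l i j) (crossing s l (π i) (π j)) := by
  refine (hl π i j).inv_right.mul_right ?_
  rw [SemiconjBy, ← map_mul, ← map_mul, Equiv.mul_swap_eq_swap_mul]

theorem semiconj_swap_right (hl : IsEquivariant s l) (hij : i ≠ j) (hik : i ≠ k) :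
    SemiconjBy (s (swap j k)) (l i j)⁻¹ (l i k)⁻¹ := by
  have h := hl (swap j k) i j
  rw [swap_apply_left, swap_apply_of_ne_of_ne hij hik] at h
  exact h.inv_right

theorem semiconj_swap_left (hl : IsEquivariant s l) (hik : i ≠ k) (hjk : j ≠ k) :
    SemiconjBy (s (swap i j)) (l i k)⁻¹ (l j k)⁻¹ := by
  have h := hl (swap i j) i k
  rw [swap_apply_left, swap_apply_of_ne_of_ne hik.symm hjk.symm] at h
  exact h.inv_right

theorem swap_mul_swap_mul_crossing (hl : IsEquivariant s l) (hij : i ≠ j) (hik : i ≠ k)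
    (hjk : j ≠ k) :
    s (swap i j) * s (swap j k) * crossing s l i j =
      crossing s l j k * s (swap i j) * s (swap j k) := by
  have h := hl.semiconj_crossing (swap i j * swap j k) i j
  rw [Perm.mul_apply, Perm.mul_apply, swap_apply_left j k, swap_apply_of_ne_of_ne hij hik,
    swap_apply_left, swap_apply_of_ne_of_ne hik.symm hjk.symm, map_mul] at h
  rw [h.eq, mul_assoc]

theorem commute_crossing_swap (hl : IsEquivariant s l) (h : [i, j, k, k'].Nodup) :
    Commute (crossing s l i j) (s (swap k k')) := by
  have hcomm := hl.semiconj_crossing (swap k k') i j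
  rw [swap_apply_of_ne_of_ne (by grind) (by grind), swap_apply_of_ne_of_ne (by grind) (by grind)]
    at hcomm
  exact hcomm.symm

theorem commute_crossing_crossing_iff (hl : IsEquivariant s l) (h : [i, j, k, k'].Nodup) :
    Commute (crossing s l i j) (crossing s l k k') ↔ Commute (l i j) (l k k') := by
  have hrr : Commute (s (swap i j)) (s (swap k k')) := (Perm.disjoint_swap_swap h).commute.map s
  have hcr : Commute (crossing s l i j) (s (swap k k')) := hl.commute_crossing_swap h
  have hrc : Commute (s (swap i j)) (crossing s l k k') :=
    (hl.commute_crossing_swap (by grind)).symm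
  refine ⟨fun h => ?_, fun h => ?_⟩
  · rw [← map_swap_mul_inv_crossing s l i j, ← map_swap_mul_inv_crossing s l k k']
    exact (hrr.mul_right hrc.inv_right).mul_left (hcr.mul_right h.inv_right).inv_left
  · have hlr : Commute (l i j) (s (swap k k')) := by
      rw [← map_swap_mul_inv_crossing s l i j]
      exact hrr.mul_left hcr.inv_left
    exact (h.inv_inv.mul_right hlr.inv_left).mul_left hrc

theorem swap_mul_crossing_mul_crossing_iff (hl : IsEquivariant s l) (hij : i ≠ j) (hik : i ≠ k)
    (hjk : j ≠ k) :
    s (swap i j) * crossing s l j k * crossing s l i j =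
      crossing s l j k * crossing s l i j * s (swap j k) ↔ Commute (l i k) (l j k) := by
  rw [← Commute.inv_inv_iff]
  exact mul_crossing_eq_iff_commute (hl.semiconj_swap_right hij hik)
    (hl.semiconj_swap_left hik hjk) (swap_comm i j ▸ hl.semiconj_swap_left hjk hik)
    (map_swap_braid s hij hik hjk)

theorem swap_mul_crossing_mul_crossing_iff' (hl : IsEquivariant s l) (hij : i ≠ j) (hik : i ≠ k)
    (hjk : j ≠ k) :
    s (swap j k) * crossing s l i j * crossing s l j k =
      crossing s l i j * crossing s l j k * s (swap i j) ↔ Commute (l i j) (l i k) := by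
  rw [← Commute.inv_inv_iff, Commute.symm_iff]
  exact mul_crossing_eq_iff_commute (swap_comm i j ▸ hl.semiconj_swap_left hjk hik)
    (swap_comm j k ▸ hl.semiconj_swap_right hik hij) (hl.semiconj_swap_right hij hik)
    (map_swap_braid s hij hik hjk).symm

theorem crossing_braid_iff (hl : IsEquivariant s l) (hij : i ≠ j) (hik : i ≠ k) (hjk : j ≠ k)
    (hsource : Commute (l i j) (l i k)) (htarget : Commute (l i k) (l j k)) :
    crossing s l i j * crossing s l j k * crossing s l i j =
      crossing s l j k * crossing s l i j * crossing s l j k ↔ Commute (l i j) (l j k) := by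
  rw [← Commute.inv_inv_iff]
  exact crossing_braid_iff_commute (hl.semiconj_swap_right hij hik)
    (swap_comm j k ▸ hl.semiconj_swap_right hik hij) (hl.semiconj_swap_left hik hjk)
    (swap_comm i j ▸ hl.semiconj_swap_left hjk hik) (map_swap_braid s hij hik hjk)
    hsource.inv_inv htarget.inv_inv

end IsEquivariant

end Crossing

namespace UVB

section PureGenerators

variable {m : ℕ} {i j k k' : Fin m}

/-- `permSection π` commutes with `λ_{1,2} = ρ₁σ₁⁻¹` when `π` fixes the first two strands, because
it is then a product of generators `ρ_k` with `k ≥ 3`. -/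
theorem commute_permSection_of_apply_eq {π : Perm (Fin m)}
    (hπ : ∀ x : Fin m, (x : ℕ) < 2 → π x = x) :
    Commute (permSection m π) (rho m 1 * (sigma m 1)⁻¹) := by
  have hle : Subgroup.closure (adjacentSwaps m 2) ≤
      (Subgroup.centralizer {rho m 1 * (sigma m 1)⁻¹}).comap (permSection m) := by
    rw [Subgroup.closure_le]
    rintro _ ⟨a, b, ha, hab, rfl⟩
    rw [SetLike.mem_coe, Subgroup.mem_comap, permSection_swap hab,
      Subgroup.mem_centralizer_singleton_iff]
    exact ((commute_rho_rho le_rfl (by omega) b.isLt).mul_left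
      (commute_sigma_rho le_rfl (by omega) b.isLt).inv_left).symm
  exact Subgroup.mem_centralizer_singleton_iff.1 (hle (mem_closure_adjacentSwaps hπ))

theorem exists_perm_pair (hij : i ≠ j) : ∃ π : Perm (Fin m), (π i : ℕ) = 0 ∧ (π j : ℕ) = 1 := by
  obtain ⟨π, hπ⟩ := exists_perm_val_eq (v := ![i, j])
    (by simpa [Function.Injective] using ⟨hij, hij.symm⟩)
  exact ⟨π, hπ 0, hπ 1⟩

open Classical in
/-- The generator `λ_{i,j}` of the pure subgroup, as a conjugate of `λ_{1,2} = ρ₁σ₁⁻¹` by a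
permutation that moves the strands `i`, `j` to the first two places; `1` if `i = j`. -/
noncomputable def pureGen (i j : Fin m) : UVB m :=
  if h : i ≠ j then
    (permSection m (exists_perm_pair h).choose)⁻¹ * (rho m 1 * (sigma m 1)⁻¹) *
      permSection m (exists_perm_pair h).choose
  else 1

theorem pureGen_self (i : Fin m) : pureGen i i = 1 := dif_neg (not_not.2 rfl)

theorem semiconj_permSection_pureGen {π : Perm (Fin m)} (hi : (π i : ℕ) = 0) (hj : (π j : ℕ) = 1) :
    SemiconjBy (permSection m π) (pureGen i j) (rho m 1 * (sigma m 1)⁻¹) := by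
  have hij : i ≠ j := by
    rintro rfl
    omega
  obtain ⟨hτi, hτj⟩ := (exists_perm_pair hij).choose_spec
  rw [pureGen, dif_pos hij]
  set τ := (exists_perm_pair hij).choose
  have hfix : ∀ x : Fin m, (x : ℕ) < 2 → (π * τ⁻¹) x = x := by
    intro x hx
    obtain h | h : (x : ℕ) = 0 ∨ (x : ℕ) = 1 := by omega
    · rw [← Fin.ext (hτi.trans h.symm), Perm.mul_apply, Perm.inv_def, symm_apply_apply]
      exact Fin.ext (hi.trans hτi.symm)
    · rw [← Fin.ext (hτj.trans h.symm), Perm.mul_apply, Perm.inv_def, symm_apply_apply]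
      exact Fin.ext (hj.trans hτj.symm)
  have hcomm := commute_permSection_of_apply_eq hfix
  rw [map_mul, map_inv] at hcomm
  rw [SemiconjBy, ← mul_assoc, ← mul_assoc, hcomm.eq, mul_assoc, inv_mul_cancel_right]

theorem isEquivariant_pureGen (m : ℕ) : IsEquivariant (permSection m) pureGen := by
  intro π i j
  by_cases hij : i = j
  · rw [hij, pureGen_self, pureGen_self]
    exact SemiconjBy.one_right _
  · obtain ⟨τ, hi, hj⟩ := exists_perm_pair (π.injective.ne hij)
    have h := semiconj_permSection_pureGen (π := τ * π) hi hj
    have h' := (semiconj_permSection_pureGen hi hj).inv_symm_left.mul_left h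
    rwa [map_mul, inv_mul_cancel_left] at h'

theorem pureGen_of_val_eq (hij : (j : ℕ) = i + 1) : pureGen i j = rho m j * (sigma m j)⁻¹ := by
  obtain ⟨i, hi⟩ := i
  induction i generalizing j with
  | zero =>
    have h := semiconj_permSection_pureGen (π := 1) (i := ⟨0, hi⟩) rfl hij
    rw [map_one, SemiconjBy, one_mul, mul_one] at h
    rw [h, hij]
  | succ i ih =>
    obtain ⟨j, hj⟩ := j
    obtain rfl : j = i + 2 := hij
    let a : Fin m := ⟨i, by omega⟩
    let b : Fin m := ⟨i + 1, hi⟩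
    let c : Fin m := ⟨i + 2, hj⟩
    have hconj : SemiconjBy (permSection m (swap a b * swap b c)) (pureGen a b) (pureGen b c) := by
      have h := isEquivariant_pureGen m (swap a b * swap b c) a b
      have hac : a ≠ c := by simp [a, c]
      rwa [Perm.mul_apply, Perm.mul_apply, swap_apply_left b c,
        swap_apply_of_ne_of_ne (by simp [a, b]) hac, swap_apply_left,
        swap_apply_of_ne_of_ne hac.symm (by simp [b, c])] at h
    rw [map_mul, permSection_swap (a := a) rfl, permSection_swap (a := b) rfl,
      ih (j := b) (by omega) rfl] at hconj
    have hconj' : SemiconjBy (rho m (i + 1) * rho m (i + 2))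
        (rho m (i + 1) * (sigma m (i + 1))⁻¹) (rho m (i + 2) * (sigma m (i + 2))⁻¹) :=
      SemiconjBy.mul_right (by rw [SemiconjBy, rho_braid (by omega) hj, mul_assoc])
        (SemiconjBy.inv_right
          (by rw [SemiconjBy, rho_mul_rho_mul_sigma (by omega) hj, mul_assoc]))
    exact mul_right_cancel (hconj.eq.symm.trans hconj'.eq)

theorem crossing_pureGen (hij : (j : ℕ) = i + 1) :
    crossing (permSection m) pureGen i j = sigma m j := by
  rw [crossing, pureGen_of_val_eq hij, permSection_swap hij, mul_inv_rev, inv_inv,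
    inv_mul_cancel_right]

theorem commute_pureGen_of_three (hij : i ≠ j) (hik : i ≠ k) (hjk : j ≠ k) :
    Commute (pureGen i j) (pureGen i k) ∧ Commute (pureGen i k) (pureGen j k) ∧
      Commute (pureGen i j) (pureGen j k) := by
  obtain ⟨π, hπ⟩ := exists_perm_val_eq (v := ![i, j, k]) (by
    simp [Function.Injective, Fin.forall_fin_succ, hij, hik, hjk, hij.symm, hik.symm, hjk.symm])
  obtain ⟨hi, hj, hk⟩ : (π i : ℕ) = 0 ∧ (π j : ℕ) = 1 ∧ (π k : ℕ) = 2 := ⟨hπ 0, hπ 1, hπ 2⟩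
  have hl := isEquivariant_pureGen m
  replace hij := π.injective.ne hij
  replace hik := π.injective.ne hik
  replace hjk := π.injective.ne hjk
  have hk2 : 2 < m := hk ▸ (π k).isLt
  have crossing_ij := crossing_pureGen (i := π i) (j := π j) (by omega)
  have crossing_jk := crossing_pureGen (i := π j) (j := π k) (by omega)
  have swap_ij := permSection_swap (a := π i) (b := π j) (by omega)
  have swap_jk := permSection_swap (a := π j) (b := π k) (by omega)
  rw [hj] at crossing_ij swap_ij
  rw [hk] at crossing_jk swap_jk
  have htarget := (hl.swap_mul_crossing_mul_crossing_iff hij hik hjk).1 (by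
    rw [crossing_ij, crossing_jk, swap_ij, swap_jk]
    exact rho_mul_sigma_succ_mul_sigma le_rfl hk2)
  have hsource := (hl.swap_mul_crossing_mul_crossing_iff' hij hik hjk).1 (by
    rw [crossing_ij, crossing_jk, swap_ij, swap_jk]
    exact rho_succ_mul_sigma_mul_sigma le_rfl hk2)
  have hchain := (hl.crossing_braid_iff hij hik hjk hsource htarget).1 (by
    rw [crossing_ij, crossing_jk]
    exact sigma_braid le_rfl hk2)
  exact ⟨(hl.commute_iff π).1 hsource, (hl.commute_iff π).1 htarget, (hl.commute_iff π).1 hchain⟩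

theorem commute_pureGen_of_four (h : [i, j, k, k'].Nodup) :
    Commute (pureGen i j) (pureGen k k') := by
  obtain ⟨π, hπ⟩ := exists_perm_val_eq (v := ![i, j, k, k']) (List.nodup_ofFn.1 (by simpa using h))
  obtain ⟨hi, hj, hk, hk'⟩ :
      (π i : ℕ) = 0 ∧ (π j : ℕ) = 1 ∧ (π k : ℕ) = 2 ∧ (π k' : ℕ) = 3 :=
    ⟨hπ 0, hπ 1, hπ 2, hπ 3⟩
  have hl := isEquivariant_pureGen m
  rw [← hl.commute_iff π, ← hl.commute_crossing_crossing_iff (h.map π.injective),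
    crossing_pureGen (by omega), crossing_pureGen (by omega), hj, hk']
  exact commute_sigma_sigma le_rfl le_rfl (hk' ▸ (π k').isLt)

theorem commute_pureGen (h : ¬(k = j ∧ k' = i)) : Commute (pureGen i j) (pureGen k k') := by
  rcases eq_or_ne i j with rfl | hij
  · exact pureGen_self i ▸ Commute.one_left _
  rcases eq_or_ne k k' with rfl | hkk'
  · exact pureGen_self k ▸ Commute.one_right _
  by_cases hik : i = k
  · subst hik
    by_cases hjk' : j = k'
    · exact hjk' ▸ Commute.refl _
    · exact (commute_pureGen_of_three hij hkk' hjk').1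
  by_cases hjk' : j = k'
  · subst hjk'
    exact (commute_pureGen_of_three hik hij hkk').2.1
  by_cases hik' : i = k'
  · subst hik'
    exact (commute_pureGen_of_three hkk' (by tauto) hij).2.2.symm
  by_cases hjk : j = k
  · subst hjk
    exact (commute_pureGen_of_three hij hik' hkk').2.2
  exact commute_pureGen_of_four (by simp; tauto)

end PureGenerators

section Lift

variable {m : ℕ} {G : Type*} [Group G] {s : Perm (Fin m) →* G} {l : Fin m → Fin m → G}

/-- The images in `G` of the generators of `UVB m` determined by `s` and `l`. -/
def liftGen (s : Perm (Fin m) →* G) (l : Fin m → Fin m → G) : UVBGen m → G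
  | .inl i => crossing s l ⟨i, by omega⟩ ⟨i + 1, by omega⟩
  | .inr i => s (swap ⟨i, by omega⟩ ⟨i + 1, by omega⟩)

theorem lift_liftGen_eq_one (hl : IsEquivariant s l)
    (hcomm : ∀ i j k k', ¬(k = j ∧ k' = i) → Commute (l i j) (l k k')) :
    ∀ r ∈ uvbRels m, FreeGroup.lift (liftGen s l) r = 1 := by
  have lift_sg : ∀ i, FreeGroup.lift (liftGen s l) (UVBGen.sg i) =
      crossing s l ⟨i, by omega⟩ ⟨i + 1, by omega⟩ := fun i => FreeGroup.lift_apply_of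
  have lift_rg : ∀ i, FreeGroup.lift (liftGen s l) (UVBGen.rg i) =
      s (swap ⟨i, by omega⟩ ⟨i + 1, by omega⟩) := fun i => FreeGroup.lift_apply_of
  rintro r (⟨i, j, hij, hr⟩ | ⟨i, j, hij, hr⟩ | ⟨i, rfl⟩)
  · have hab : (⟨i, by omega⟩ : Fin m) ≠ ⟨j, by omega⟩ := by grind
    have hac : (⟨i, by omega⟩ : Fin m) ≠ ⟨j + 1, by omega⟩ := by grind
    have hbc : (⟨j, by omega⟩ : Fin m) ≠ ⟨j + 1, by omega⟩ := by grind
    have hsource := hcomm ⟨i, by omega⟩ ⟨j, by omega⟩ ⟨i, by omega⟩ ⟨j + 1, by omega⟩ (by tauto)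
    have htarget := hcomm ⟨i, by omega⟩ ⟨j + 1, by omega⟩ ⟨j, by omega⟩ ⟨j + 1, by omega⟩ (by tauto)
    have hchain := hcomm ⟨i, by omega⟩ ⟨j, by omega⟩ ⟨j, by omega⟩ ⟨j + 1, by omega⟩ (by tauto)
    rcases hr with rfl | rfl | rfl | rfl | rfl <;>
      simp only [map_mul, map_inv, lift_sg, lift_rg, mul_inv_eq_one, ← hij]
    · exact (hl.crossing_braid_iff hab hac hbc hsource htarget).2 hchain
    · exact map_swap_braid s hab hac hbc
    · exact hl.swap_mul_swap_mul_crossing hab hac hbc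
    · exact (hl.swap_mul_crossing_mul_crossing_iff hab hac hbc).2 htarget
    · exact (hl.swap_mul_crossing_mul_crossing_iff' hab hac hbc).2 hsource
  · have hnodup : [(⟨i, by omega⟩ : Fin m), ⟨i + 1, by omega⟩, ⟨j, by omega⟩,
        ⟨j + 1, by omega⟩].Nodup := by
      simp
      omega
    rcases hr with rfl | rfl | rfl <;>
      simp only [map_mul, map_inv, lift_sg, lift_rg, mul_inv_eq_one]
    · exact (hl.commute_crossing_crossing_iff hnodup).2 (hcomm _ _ _ _ (by grind))
    · exact (Perm.disjoint_swap_swap hnodup).commute.map s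
    · exact hl.commute_crossing_swap hnodup
  · rw [map_mul, lift_rg, ← map_mul, swap_mul_self, map_one]

/-- Universal property of `UVB m`: the homomorphism sending `s` on permutations and `λ_{i,j}` to
`l i j`. -/
def lift (hl : IsEquivariant s l)
    (hcomm : ∀ i j k k', ¬(k = j ∧ k' = i) → Commute (l i j) (l k k')) : UVB m →* G :=
  PresentedGroup.toGroup (lift_liftGen_eq_one hl hcomm)

variable {hl : IsEquivariant s l}
  {hcomm : ∀ i j k k', ¬(k = j ∧ k' = i) → Commute (l i j) (l k k')} {a b : Fin m}

theorem lift_sigma (hab : (b : ℕ) = a + 1) : lift hl hcomm (sigma m b) = crossing s l a b := by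
  rw [sigma_eq_mk (by omega) b.isLt]
  refine (PresentedGroup.toGroup.of _).trans (congrArg₂ (crossing s l) ?_ ?_) <;> grind

theorem lift_rho (hab : (b : ℕ) = a + 1) : lift hl hcomm (rho m b) = s (swap a b) := by
  rw [rho_eq_mk (by omega) b.isLt]
  refine (PresentedGroup.toGroup.of _).trans (congrArg s (congrArg₂ swap ?_ ?_)) <;> grind

theorem lift_permSection (π : Perm (Fin m)) : lift hl hcomm (permSection m π) = s π := by
  have : (lift hl hcomm).comp (permSection m) = s := perm_hom_ext fun a b hab => by
    rw [MonoidHom.comp_apply, permSection_swap hab, lift_rho hab]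
  exact DFunLike.congr_fun this π

theorem lift_pureGen {i j : Fin m} (hij : i ≠ j) : lift hl hcomm (pureGen i j) = l i j := by
  obtain ⟨π, hi, hj⟩ := exists_perm_pair hij
  have hadj : (π j : ℕ) = π i + 1 := by omega
  have h := (isEquivariant_pureGen m π i j).map (lift hl hcomm)
  rw [pureGen_of_val_eq hadj, map_mul, map_inv, lift_rho hadj, lift_sigma hadj,
    map_swap_mul_inv_crossing, lift_permSection] at h
  exact mul_left_cancel (h.eq.trans (hl π i j).eq.symm)

end Lift

section PureSubgroup

variable {m : ℕ}

theorem isEquivariant_one (m : ℕ) :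
    IsEquivariant (MonoidHom.id (Perm (Fin m))) fun _ _ => 1 :=
  fun π _ _ => SemiconjBy.one_right π

/-- The homomorphism `ι : UVB m → S_m` sending `σ_k` and `ρ_k` to the transposition `(k, k+1)`. -/
def toPerm (m : ℕ) : UVB m →* Perm (Fin m) :=
  lift (isEquivariant_one m) fun _ _ _ _ _ => Commute.one_left 1

theorem toPerm_sigma {a b : Fin m} (hab : (b : ℕ) = a + 1) :
    toPerm m (sigma m b) = swap a b := by
  rw [toPerm, lift_sigma hab, crossing, inv_one, one_mul, MonoidHom.id_apply]

theorem toPerm_rho {a b : Fin m} (hab : (b : ℕ) = a + 1) : toPerm m (rho m b) = swap a b :=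
  lift_rho hab

theorem toPerm_permSection (π : Perm (Fin m)) : toPerm m (permSection m π) = π :=
  lift_permSection π

/-- The pure subgroup of `UVB m`. -/
abbrev UVP (m : ℕ) : Subgroup (UVB m) := (toPerm m).ker

theorem comp_toPerm_of_mem_UVP {X : Type*} {a : UVB m} (ha : a ∈ UVP m) (f : Fin m → X) :
    f ∘ toPerm m a = f := by
  rw [MonoidHom.mem_ker.1 ha, Perm.coe_one, Function.comp_id]

theorem pureGen_mem_UVP (i j : Fin m) : pureGen i j ∈ UVP m := by
  rcases eq_or_ne i j with rfl | hij
  · exact pureGen_self i ▸ one_mem _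
  · exact lift_pureGen hij

theorem closure_pureGen_sup_range_permSection (m : ℕ) :
    Subgroup.closure (Set.range fun p : Fin m × Fin m => pureGen p.1 p.2) ⊔
      (permSection m).range = ⊤ := by
  refine eq_top_of_generators_mem (fun a b hab => ?_) fun a b hab => ?_
  · rw [← crossing_pureGen hab, crossing]
    exact Subgroup.mul_mem_sup (inv_mem (Subgroup.subset_closure ⟨(a, b), rfl⟩)) ⟨_, rfl⟩
  · exact Subgroup.mem_sup_right ⟨_, permSection_swap hab⟩

theorem normal_closure_pureGen (m : ℕ) :
    (Subgroup.closure (Set.range fun p : Fin m × Fin m => pureGen p.1 p.2)).Normal := by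
  rw [← Subgroup.normalizer_eq_top_iff, eq_top_iff, ← closure_pureGen_sup_range_permSection m]
  refine sup_le Subgroup.le_normalizer (Subgroup.le_normalizer_closure_iff.2 ?_)
  rintro _ ⟨π, rfl⟩ _ ⟨p, rfl⟩
  exact Subgroup.subset_closure
    ⟨(π p.1, π p.2), eq_mul_inv_of_mul_eq (isEquivariant_pureGen m π p.1 p.2).symm⟩

theorem closure_pureGen (m : ℕ) :
    Subgroup.closure (Set.range fun p : Fin m × Fin m => pureGen p.1 p.2) = UVP m := by
  have hle : Subgroup.closure (Set.range fun p : Fin m × Fin m => pureGen p.1 p.2) ≤ UVP m := by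
    rw [Subgroup.closure_le]
    rintro _ ⟨p, rfl⟩
    exact pureGen_mem_UVP p.1 p.2
  refine le_antisymm hle fun g hg => ?_
  have := normal_closure_pureGen m
  have hsup : g ∈ _ := closure_pureGen_sup_range_permSection m ▸ Subgroup.mem_top g
  obtain ⟨k, hk, _, ⟨π, rfl⟩, rfl⟩ := Subgroup.mem_sup_of_normal_left.1 hsup
  rw [MonoidHom.mem_ker, map_mul, (hle hk : toPerm m k = 1), one_mul, toPerm_permSection] at hg
  rwa [hg, map_one, mul_one]

end PureSubgroup

end UVB

theorem IsIota.eq_toPerm {n : ℕ} {ι : UVB n →* Perm (Fin n)} (hι : IsIota n ι) :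
    ι = UVB.toPerm n := by
  refine UVB.hom_ext (fun a b hab => ?_) fun a b hab => ?_
  · rw [(hι b (by omega) (by omega)).1, UVB.toPerm_sigma hab]
    congr
    grind
  · rw [(hι b (by omega) (by omega)).2, UVB.toPerm_rho hab]
    congr
    grind

namespace UVB

section Inclusion

variable {m : ℕ}

theorem incl_sigma {k : ℕ} (hk : 1 ≤ k) (hkm : k < m) : incl m (sigma m k) = sigma (m + 1) k := by
  rw [sigma_eq_mk hk hkm, sigma_eq_mk hk (by omega)]
  exact PresentedGroup.toGroup.of _

theorem incl_rho {k : ℕ} (hk : 1 ≤ k) (hkm : k < m) : incl m (rho m k) = rho (m + 1) k := by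
  rw [rho_eq_mk hk hkm, rho_eq_mk hk (by omega)]
  exact PresentedGroup.toGroup.of _

theorem incl_permSection (π : Perm (Fin m)) :
    incl m (permSection m π) = permSection (m + 1) (π.viaEmbedding Fin.castSuccEmb) := by
  have h : (incl m).comp (permSection m) =
      (permSection (m + 1)).comp (Perm.viaEmbeddingHom Fin.castSuccEmb) := by
    refine perm_hom_ext fun a b hab => ?_
    have hab' : (b.castSucc : ℕ) = a.castSucc + 1 := hab
    rw [MonoidHom.comp_apply, MonoidHom.comp_apply, Perm.viaEmbeddingHom_apply,
      viaEmbedding_swap, permSection_swap hab, incl_rho (by omega) b.isLt]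
    exact (permSection_swap hab').symm
  exact DFunLike.congr_fun h π

theorem incl_pureGen (i j : Fin m) : incl m (pureGen i j) = pureGen i.castSucc j.castSucc := by
  rcases eq_or_ne i j with rfl | hij
  · rw [pureGen_self, pureGen_self, map_one]
  obtain ⟨π, hi, hj⟩ := exists_perm_pair hij
  have h := (semiconj_permSection_pureGen hi hj).map (incl m)
  have h' := semiconj_permSection_pureGen (i := i.castSucc) (j := j.castSucc)
    (π := π.viaEmbedding Fin.castSuccEmb) (by simpa [viaEmbedding_castSucc])
    (by simpa [viaEmbedding_castSucc])
  rw [incl_permSection, map_mul, map_inv, incl_rho le_rfl (by omega),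
    incl_sigma le_rfl (by omega)] at h
  exact mul_left_cancel (h.eq.trans h'.eq.symm)

theorem toPerm_incl (g : UVB m) :
    toPerm (m + 1) (incl m g) = (toPerm m g).viaEmbedding Fin.castSuccEmb := by
  have h : (toPerm (m + 1)).comp (incl m) =
      (Perm.viaEmbeddingHom Fin.castSuccEmb).comp (toPerm m) := by
    refine hom_ext (fun a b hab => ?_) fun a b hab => ?_ <;>
      have hab' : (b.castSucc : ℕ) = a.castSucc + 1 := hab <;>
      rw [MonoidHom.comp_apply, MonoidHom.comp_apply, Perm.viaEmbeddingHom_apply]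
    · rw [toPerm_sigma hab, viaEmbedding_swap, incl_sigma (by omega) b.isLt]
      exact toPerm_sigma hab'
    · rw [toPerm_rho hab, viaEmbedding_swap, incl_rho (by omega) b.isLt]
      exact toPerm_rho hab'
  exact DFunLike.congr_fun h g

theorem incl_mem_UVP {c : UVB m} (hc : c ∈ UVP m) : incl m c ∈ UVP (m + 1) := by
  rw [MonoidHom.mem_ker, toPerm_incl, MonoidHom.mem_ker.1 hc, ← Perm.viaEmbeddingHom_apply, map_one]

theorem commute_incl_pureGen {c : UVB m} (hc : c ∈ UVP m) {a b : Fin (m + 1)}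
    (hab : a = Fin.last m ∨ b = Fin.last m) : Commute (incl m c) (pureGen a b) := by
  have hle : UVP m ≤ (Subgroup.centralizer {pureGen a b}).comap (incl m) := by
    rw [← closure_pureGen, Subgroup.closure_le]
    rintro _ ⟨p, rfl⟩
    rw [SetLike.mem_coe, Subgroup.mem_comap, Subgroup.mem_centralizer_singleton_iff, incl_pureGen]
    exact commute_pureGen (by grind [Fin.castSucc_ne_last])
  exact Subgroup.mem_centralizer_singleton_iff.1 (hle hc)

theorem commute_incl_incl_rho (c : UVB m) :
    Commute (incl (m + 1) (incl m c)) (rho (m + 2) (m + 1)) := by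
  have htop : (Subgroup.centralizer {rho (m + 2) (m + 1)}).comap
      ((incl (m + 1)).comp (incl m)) = ⊤ := by
    refine eq_top_of_generators_mem (fun a b hab => ?_) fun a b hab => ?_ <;>
      rw [Subgroup.mem_comap, MonoidHom.comp_apply, Subgroup.mem_centralizer_singleton_iff]
    · rw [incl_sigma (by omega) b.isLt, incl_sigma (by omega) (by omega)]
      exact commute_sigma_rho (by omega) (by omega) (by omega)
    · rw [incl_rho (by omega) b.isLt, incl_rho (by omega) (by omega)]
      exact commute_rho_rho (by omega) (by omega) (by omega)
  exact Subgroup.mem_centralizer_singleton_iff.1 (htop ▸ Subgroup.mem_top c :)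

end Inclusion

end UVB

section Conjugacy

variable {G : Type*} [Group G]

theorem isConj_of_semiconjBy {g a b : G} (h : SemiconjBy g a b) : IsConj a b := ⟨toUnits g, h⟩

theorem isConj_mul_comm (a b : G) : IsConj (a * b) (b * a) :=
  isConj_of_semiconjBy (g := b) (mul_assoc b a b).symm

theorem isConj_mul_mul_of_semiconjBy {c w w' t : G} (ht : SemiconjBy t w' w) (hc : Commute c w') :
    IsConj (c * w * t) (c * w' * t) := by
  rw [mul_assoc, ← ht.eq, ← mul_assoc, hc.eq, mul_assoc w']
  exact isConj_mul_comm _ _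

variable {α : Type*} [DecidableEq α] {s : Perm α →* G} {l : α → α → G}

theorem IsEquivariant.isConj_mul_swap_mul_swap (hl : IsEquivariant s l) {i j p q : α} {c : G}
    (h : [i, j, p, q].Nodup) (hip : Commute c (l i p)) (hjq : Commute c (l j q))
    (hipjq : Commute (l i p) (l j q)) :
    IsConj (c * (l i p * l p i) * s (swap j p * swap i q))
      (c * (l j q * l q j) * s (swap j p * swap i q)) := by
  set τ := swap j p * swap i q
  have hi : τ i = q := by simp [τ, swap_apply_of_ne_of_ne (by grind : q ≠ j) (by grind : q ≠ p)]
  have hj : τ j = p := by simp [τ, swap_apply_of_ne_of_ne (by grind : j ≠ i) (by grind : j ≠ q)]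
  have hp : τ p = j := by simp [τ, swap_apply_of_ne_of_ne (by grind : p ≠ i) (by grind : p ≠ q)]
  have hq : τ q = i := by simp [τ, swap_apply_of_ne_of_ne (by grind : i ≠ j) (by grind : i ≠ p)]
  have hslide : SemiconjBy (s τ) (l j q) (l p i) := by
    have := hl τ j q
    rwa [hj, hq] at this
  have hslide' : SemiconjBy (s τ) (l i p) (l q j) := by
    have := hl τ i p
    rwa [hi, hp] at this
  rw [← mul_assoc, ← mul_assoc]
  refine (isConj_mul_mul_of_semiconjBy hslide (hjq.mul_left hipjq)).trans ?_
  rw [mul_assoc c, hipjq.eq, ← mul_assoc]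
  exact (isConj_mul_mul_of_semiconjBy hslide' (hip.mul_left hipjq.symm)).symm

theorem IsEquivariant.isConj_of_commute_swap (hl : IsEquivariant s l) {i j p q : α} {c : G}
    (h : [i, j, p, q].Nodup) (hc : Commute c (s (swap p q))) :
    IsConj (c * (l j q * l q j) * s (swap j p * swap i q))
      (c * (l j p * l p j) * s (swap i p * swap j q)) := by
  have hi : swap p q i = i := swap_apply_of_ne_of_ne (by grind) (by grind)
  have hj : swap p q j = j := swap_apply_of_ne_of_ne (by grind) (by grind)
  have hτ : SemiconjBy (swap p q) (swap j p * swap i q) (swap i p * swap j q) := by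
    have hcomm : Commute (swap i p) (swap j q) := (Perm.disjoint_swap_swap (by grind)).commute
    rw [hcomm.eq]
    exact SemiconjBy.mul_right
      (by rw [SemiconjBy, mul_swap_eq_swap_mul, hj, swap_apply_left])
      (by rw [SemiconjBy, mul_swap_eq_swap_mul, hi, swap_apply_right])
  have hjq := hl (swap p q) j q
  have hqj := hl (swap p q) q j
  rw [hj, swap_apply_right] at hjq hqj
  exact isConj_of_semiconjBy
    ((SemiconjBy.mul_right hc.symm (hjq.mul_right hqj)).mul_right (hτ.map s))

end Conjugacy

open scoped commutatorElement in
theorem commutator_closure_le {G : Type*} [Group G] {s : Set G} {N : Subgroup G}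
    (hN : Subgroup.closure s ≤ Subgroup.normalizer N) (h : ∀ x ∈ s, ∀ y ∈ s, ⁅x, y⁆ ∈ N) :
    ⁅Subgroup.closure s, Subgroup.closure s⁆ ≤ N := by
  have conj_mem {a n : G} (ha : a ∈ Subgroup.closure s) (hn : n ∈ N) : a * n * a⁻¹ ∈ N :=
    (Subgroup.mem_normalizer_iff.1 (hN ha) n).1 hn
  have mem_of_forall_mem {x : G} (hx : ∀ y ∈ s, ⁅x, y⁆ ∈ N) {y : G}
      (hy : y ∈ Subgroup.closure s) : ⁅x, y⁆ ∈ N := by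
    induction hy using Subgroup.closure_induction with
    | mem y hy => exact hx y hy
    | one => rw [commutatorElement_one_right]; exact one_mem N
    | mul a b ha _ iha ihb =>
      rw [show ⁅x, a * b⁆ = ⁅x, a⁆ * (a * ⁅x, b⁆ * a⁻¹) by simp only [commutatorElement_def]; group]
      exact mul_mem iha (conj_mem ha ihb)
    | inv a ha iha =>
      rw [show ⁅x, a⁻¹⁆ = a⁻¹ * ⁅x, a⁆⁻¹ * a⁻¹⁻¹ by simp only [commutatorElement_def]; group]
      exact conj_mem (inv_mem ha) (inv_mem iha)
  refine Subgroup.commutator_le.2 fun x hx y hy => mem_of_forall_mem (fun z hz => ?_) hy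
  rw [← commutatorElement_inv]
  exact inv_mem (mem_of_forall_mem (h z hz) hx)

open UVB

namespace Markov

section Stabilization

variable {n : ℕ} {x y z : Σ n, UVB n}

theorem symm (h : Markov x y) : Markov y x := Relation.EqvGen.symm _ _ h

theorem trans (h : Markov x y) (h' : Markov y z) : Markov x z := Relation.EqvGen.trans _ _ _ h h'

theorem of_isConj {a b : UVB n} (h : IsConj a b) : Markov ⟨n, a⟩ ⟨n, b⟩ := by
  obtain ⟨g, rfl⟩ := isConj_iff.1 h
  exact Relation.EqvGen.rel _ _ (.conj n a g)

theorem incl_mul_rho (a : UVB n) : Markov ⟨n, a⟩ ⟨n + 1, incl n a * rho (n + 1) n⟩ :=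
  Relation.EqvGen.rel _ _ (.stabVirt n a)

theorem incl_mul_permSection (a : UVB n) (k : Fin n) :
    Markov ⟨n, a⟩
      ⟨n + 1, incl n a * permSection (n + 1) (swap k.castSucc (Fin.last n))⟩ := by
  obtain ⟨n, rfl⟩ : ∃ m, n = m + 1 := Nat.exists_eq_succ_of_ne_zero k.pos.ne'
  let t := swap k.castSucc (Fin.last n).castSucc
  have hconj : IsConj a (permSection (n + 1) (swap k (Fin.last n)) * a *
      (permSection (n + 1) (swap k (Fin.last n)))⁻¹) := isConj_iff.2 ⟨_, rfl⟩
  refine (of_isConj hconj).trans ((incl_mul_rho _).trans ?_)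
  refine (of_isConj (isConj_iff.2 ⟨permSection (n + 2) t, ?_⟩)).symm
  have ht : t * swap k.castSucc (Fin.last (n + 1)) * t⁻¹ =
      swap (Fin.last n).castSucc (Fin.last (n + 1)) := by
    rw [← swap_apply_apply, swap_apply_left, swap_apply_of_ne_of_ne] <;>
      exact (Fin.castSucc_ne_last _).symm
  have hrho : permSection (n + 2) (swap (Fin.last n).castSucc (Fin.last (n + 1))) =
      rho (n + 2) (n + 1) := permSection_swap rfl
  rw [map_mul, map_mul, map_inv, incl_permSection, viaEmbedding_swap, ← hrho, ← ht, map_mul,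
    map_mul, map_inv]
  simp only [mul_assoc, Fin.coe_castSuccEmb, t]
  group

variable {c : UVB n} {i j : Fin n}

theorem mul_pureGen_mul_pureGen_stab (hc : c ∈ UVP n) (hij : i ≠ j) :
    Markov ⟨n, c * (pureGen i j * pureGen j i)⟩
      ⟨n + 1, incl n c * (pureGen i.castSucc (Fin.last n) * pureGen (Fin.last n) i.castSucc) *
        permSection (n + 1) (swap j.castSucc (Fin.last n))⟩ := by
  have hi : swap j.castSucc (Fin.last n) i.castSucc = i.castSucc :=
    swap_apply_of_ne_of_ne (by simpa) (Fin.castSucc_ne_last i)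
  have hl := isEquivariant_pureGen (n + 1) (swap j.castSucc (Fin.last n))
  have hslide := (hl i.castSucc (Fin.last n)).mul_right (hl (Fin.last n) i.castSucc)
  rw [hi, swap_apply_right] at hslide
  refine (incl_mul_permSection _ j).trans (of_isConj ?_)
  rw [map_mul, map_mul, incl_pureGen, incl_pureGen]
  exact isConj_mul_mul_of_semiconjBy hslide
    ((commute_incl_pureGen hc (.inr rfl)).mul_right (commute_incl_pureGen hc (.inl rfl)))

theorem mul_pureGen_mul_pureGen_stab_stab (hc : c ∈ UVP n) (hij : i ≠ j) :
    let p := (Fin.last n).castSucc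
    let q := Fin.last (n + 1)
    let i' := i.castSucc.castSucc
    let j' := j.castSucc.castSucc
    Markov ⟨n, c * (pureGen i j * pureGen j i)⟩
      ⟨n + 2, incl (n + 1) (incl n c) * (pureGen i' p * pureGen p i') *
        permSection (n + 2) (swap j' p * swap i' q)⟩ := by
  refine (mul_pureGen_mul_pureGen_stab hc hij).trans
    ((incl_mul_permSection _ i.castSucc).trans (of_isConj ?_))
  rw [map_mul, map_mul, map_mul, incl_pureGen, incl_pureGen, incl_permSection, viaEmbedding_swap,
    mul_assoc, ← map_mul]
  exact IsConj.refl _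

theorem mul_pureGen_mul_pureGen_comm (hc : c ∈ UVP n) (hij : i ≠ j) :
    Markov ⟨n, c * (pureGen i j * pureGen j i)⟩ ⟨n, c * (pureGen j i * pureGen i j)⟩ := by
  refine (mul_pureGen_mul_pureGen_stab_stab hc hij).trans
    (.trans (of_isConj ?_) (mul_pureGen_mul_pureGen_stab_stab hc hij.symm).symm)
  set p := (Fin.last n).castSucc
  set q := Fin.last (n + 1)
  set i' := i.castSucc.castSucc
  set j' := j.castSucc.castSucc
  have hl := isEquivariant_pureGen (n + 2)
  have hnodup : [i', j', p, q].Nodup := by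
    simp [i', j', p, q, hij]
  have hip : Commute (incl (n + 1) (incl n c)) (pureGen i' p) := by
    have h := (commute_incl_pureGen hc (a := i.castSucc) (.inr rfl)).map (incl (n + 1))
    rwa [incl_pureGen] at h
  have hjq : Commute (incl (n + 1) (incl n c)) (pureGen j' q) :=
    commute_incl_pureGen (incl_mem_UVP hc) (.inr rfl)
  have hpq : Commute (incl (n + 1) (incl n c)) (permSection (n + 2) (swap p q)) := by
    rw [permSection_swap (by simp [p, q])]
    exact commute_incl_incl_rho c
  exact (hl.isConj_mul_swap_mul_swap hnodup hip hjq (commute_pureGen_of_four (by grind))).trans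
    (hl.isConj_of_commute_swap hnodup hpq)

end Stabilization

section Insertion

variable {n : ℕ}

/-- The pure elements that may be inserted anywhere in a pure element of `UVB n` without changing
its fused Markov class. -/
def insertable (n : ℕ) : Subgroup (UVB n) where
  carrier := {a | a ∈ UVP n ∧ ∀ c ∈ UVP n, Markov ⟨n, c * a⟩ ⟨n, c⟩}
  one_mem' := ⟨one_mem _, fun c _ => by rw [mul_one]; exact of_isConj (IsConj.refl c)⟩
  mul_mem' := by
    rintro a b ⟨ha, ha'⟩ ⟨hb, hb'⟩
    refine ⟨mul_mem ha hb, fun c hc => ?_⟩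
    rw [← mul_assoc]
    exact (hb' _ (mul_mem hc ha)).trans (ha' c hc)
  inv_mem' := by
    rintro a ⟨ha, ha'⟩
    refine ⟨inv_mem ha, fun c hc => ?_⟩
    have h := ha' (c * a⁻¹) (mul_mem hc (inv_mem ha))
    rw [inv_mul_cancel_right] at h
    exact h.symm

theorem UVP_le_normalizer_insertable (n : ℕ) : UVP n ≤ Subgroup.normalizer (insertable n) := by
  refine Subgroup.le_normalizer_iff.2 fun g hg a ⟨ha, ha'⟩ => ⟨?_, fun c hc => ?_⟩
  · exact mul_mem (mul_mem hg ha) (inv_mem hg)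
  · have hconj : IsConj (c * (g * a * g⁻¹)) (g⁻¹ * c * g * a) :=
      isConj_iff.2 ⟨g⁻¹, by group⟩
    have hconj' : IsConj (g⁻¹ * c * g) c := isConj_iff.2 ⟨g, by group⟩
    exact (of_isConj hconj).trans
      ((ha' _ (mul_mem (mul_mem (inv_mem hg) hc) hg)).trans (of_isConj hconj'))

open scoped commutatorElement in
theorem commutator_pureGen_mem_insertable (i j k k' : Fin n) :
    ⁅pureGen i j, pureGen k k'⁆ ∈ insertable n := by
  by_cases h : k = j ∧ k' = i
  · obtain ⟨rfl, rfl⟩ := h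
    rcases eq_or_ne k k' with rfl | hne
    · rw [commutatorElement_self]
      exact one_mem _
    set x := pureGen k' k
    set y := pureGen k k'
    have hx : x ∈ UVP n := pureGen_mem_UVP _ _
    have hy : y ∈ UVP n := pureGen_mem_UVP _ _
    rw [commutatorElement_def]
    refine ⟨mul_mem (mul_mem (mul_mem hx hy) (inv_mem hx)) (inv_mem hy), fun c hc => ?_⟩
    have hconj : IsConj (c * (x * y * x⁻¹ * y⁻¹)) (x⁻¹ * y⁻¹ * c * (x * y)) :=
      isConj_iff.2 ⟨x⁻¹ * y⁻¹, by group⟩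
    have hconj' : IsConj (x⁻¹ * y⁻¹ * c * (y * x)) c := isConj_iff.2 ⟨y * x, by group⟩
    exact (of_isConj hconj).trans ((mul_pureGen_mul_pureGen_comm
      (mul_mem (mul_mem (inv_mem hx) (inv_mem hy)) hc) hne.symm).trans (of_isConj hconj'))
  · rw [commutatorElement_eq_one_iff_commute.2 (commute_pureGen h)]
    exact one_mem _

theorem commutator_UVP_le_insertable (n : ℕ) : ⁅UVP n, UVP n⁆ ≤ insertable n := by
  rw [← closure_pureGen]
  refine commutator_closure_le (closure_pureGen n ▸ UVP_le_normalizer_insertable n) ?_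
  rintro _ ⟨p, rfl⟩ _ ⟨p', rfl⟩
  exact commutator_pureGen_mem_insertable _ _ _ _

theorem of_mul_inv_mem_commutator {a b : UVB n} (hb : b ∈ UVP n) (h : a * b⁻¹ ∈ ⁅UVP n, UVP n⁆) :
    Markov ⟨n, a⟩ ⟨n, b⟩ := by
  have hconj : IsConj a (b * (a * b⁻¹)) := isConj_iff.2 ⟨b, by group⟩
  exact (of_isConj hconj).trans ((commutator_UVP_le_insertable n h).2 b hb)

end Insertion

end Markov

section Precomposition

variable {α X M : Type*}

/-- The action of the permutations of `α` on the functions on `α`-tuples, by permuting the entries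
of the tuples. -/
def precompMulAut (α X M : Type*) [Mul M] : Perm α →* MulAut ((α → X) → M) where
  toFun π :=
    { toFun d f := d (f ∘ π)
      invFun d f := d (f ∘ π.symm)
      left_inv d := funext fun f => congrArg d (by ext; simp)
      right_inv d := funext fun f => congrArg d (by ext; simp)
      map_mul' _ _ := rfl }
  map_one' := rfl
  map_mul' _ _ := rfl

theorem precompMulAut_apply [Mul M] (π : Perm α) (d : (α → X) → M) (f : α → X) :
    precompMulAut α X M π d f = d (f ∘ π) := rfl

theorem isEquivariant_inr_inl [CommGroup M] (l : X → X → M) :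
    IsEquivariant (SemidirectProduct.inr : _ →* _ ⋊[precompMulAut α X M] _)
      fun i j => SemidirectProduct.inl fun f => l (f i) (f j) := fun π i j => by
  rw [SemiconjBy, ← mul_inv_eq_iff_eq_mul, ← map_inv, ← SemidirectProduct.inl_aut]
  rfl

/-- Precomposition with the restriction of an `(m + 1)`-tuple to its first `m` entries. -/
def forgetLast (m : ℕ) (X M : Type*) [CommGroup M] :
    ((Fin m → X) → M) →* ((Fin (m + 1) → X) → M) :=
  MonoidHom.pi fun F => Pi.evalMonoidHom (fun _ => M) (F ∘ Fin.castSucc)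

theorem forgetLast_comp_precompMulAut {m : ℕ} [CommGroup M] (π : Perm (Fin m)) :
    (forgetLast m X M).comp (precompMulAut (Fin m) X M π).toMonoidHom =
      (precompMulAut (Fin (m + 1)) X M (Perm.viaEmbeddingHom Fin.castSuccEmb π)).toMonoidHom.comp
        (forgetLast m X M) := by
  ext d F
  exact congrArg d (funext fun i => congrArg F (viaEmbedding_castSucc π i).symm)

end Precomposition

namespace UVB

section Weight

variable {m : ℕ} {X M : Type*} [CommGroup M]

/-- The homomorphism recording the permutation of a braid together with its weights; its first
component is the crossed homomorphism `weight l`. -/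
def weightHom (l : X → X → M) :
    UVB m →* ((Fin m → X) → M) ⋊[precompMulAut (Fin m) X M] Perm (Fin m) :=
  lift (isEquivariant_inr_inl l) fun _ _ _ _ _ => (Commute.all _ _).map SemidirectProduct.inl

/-- The weight of a braid whose strands are coloured by `f`: the generator `λ_{i,j}` contributes
`l (f i) (f j)`. -/
def weight (l : X → X → M) (g : UVB m) (f : Fin m → X) : M := (weightHom l g).left f

variable (l : X → X → M)

theorem weightHom_right (g : UVB m) : (weightHom l g).right = toPerm m g := by
  have h : SemidirectProduct.rightHom.comp (weightHom l) = toPerm m := by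
    refine hom_ext (fun a b hab => ?_) fun a b hab => ?_ <;> rw [MonoidHom.comp_apply]
    · rw [toPerm_sigma hab, weightHom, lift_sigma hab, crossing, map_mul, map_inv,
        SemidirectProduct.rightHom_inl, SemidirectProduct.rightHom_inr, inv_one, one_mul]
    · rw [toPerm_rho hab, weightHom, lift_rho hab, SemidirectProduct.rightHom_inr]
  exact DFunLike.congr_fun h g

theorem weight_one (f : Fin m → X) : weight l 1 f = 1 := by
  rw [weight, map_one, SemidirectProduct.one_left, Pi.one_apply]

theorem weight_mul (g h : UVB m) (f : Fin m → X) :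
    weight l (g * h) f = weight l g f * weight l h (f ∘ toPerm m g) := by
  rw [weight, map_mul, SemidirectProduct.mul_left, Pi.mul_apply, precompMulAut_apply,
    weightHom_right, weight, weight]

theorem weight_inv (g : UVB m) (f : Fin m → X) :
    weight l g⁻¹ f = (weight l g (f ∘ toPerm m g⁻¹))⁻¹ := by
  rw [eq_inv_iff_mul_eq_one, ← weight_mul, inv_mul_cancel, weight_one]

theorem weight_permSection (π : Perm (Fin m)) (f : Fin m → X) :
    weight l (permSection m π) f = 1 := by
  rw [weight, weightHom, lift_permSection, SemidirectProduct.left_inr, Pi.one_apply]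

theorem weight_sigma {a b : Fin m} (hab : (b : ℕ) = a + 1) (f : Fin m → X) :
    weight l (sigma m b) f = (l (f a) (f b))⁻¹ := by
  rw [weight, weightHom, lift_sigma hab, crossing, ← map_inv, SemidirectProduct.mul_left,
    SemidirectProduct.left_inl, SemidirectProduct.left_inr, map_one, mul_one, Pi.inv_apply]

theorem weight_pureGen {i j : Fin m} (hij : i ≠ j) (f : Fin m → X) :
    weight l (pureGen i j) f = l (f i) (f j) := by
  rw [weight, weightHom, lift_pureGen hij, SemidirectProduct.left_inl]

theorem weight_eq_of_semiconjBy {a b g : UVB m} (h : SemiconjBy g a b) {f : Fin m → X}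
    (hf : f ∘ toPerm m b = f) : weight l b f = weight l a (f ∘ toPerm m g) := by
  have hga := weight_mul l g a f
  rw [h.eq, weight_mul, hf, mul_comm] at hga
  exact mul_left_cancel hga

theorem weightHom_incl (g : UVB m) :
    weightHom l (incl m g) = SemidirectProduct.map (forgetLast m X M)
      (Perm.viaEmbeddingHom Fin.castSuccEmb) forgetLast_comp_precompMulAut (weightHom l g) := by
  have h : (weightHom l).comp (incl m) =
      (SemidirectProduct.map _ _ forgetLast_comp_precompMulAut).comp (weightHom l) := by
    refine hom_ext (fun a b hab => ?_) fun a b hab => ?_ <;>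
      have hab' : (b.castSucc : ℕ) = a.castSucc + 1 := hab <;>
      rw [MonoidHom.comp_apply, MonoidHom.comp_apply]
    · rw [incl_sigma (by omega) b.isLt, weightHom, weightHom, lift_sigma hab, ← Fin.val_castSucc b,
        lift_sigma hab', crossing, crossing, map_mul, map_inv, SemidirectProduct.map_inl,
        SemidirectProduct.map_inr, Perm.viaEmbeddingHom_apply, viaEmbedding_swap]
      rfl
    · rw [incl_rho (by omega) b.isLt, weightHom, weightHom, lift_rho hab, ← Fin.val_castSucc b,
        lift_rho hab', SemidirectProduct.map_inr, Perm.viaEmbeddingHom_apply, viaEmbedding_swap]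
      rfl
  exact DFunLike.congr_fun h g

theorem weight_incl (g : UVB m) (F : Fin (m + 1) → X) :
    weight l (incl m g) F = weight l g (F ∘ Fin.castSucc) := by
  rw [weight, weightHom_incl, SemidirectProduct.map_left]
  rfl

end Weight

section PureClass

variable {n : ℕ}

/-- The family of the classes of the `λ_{i,j}` in the abelianization of the pure subgroup. -/
noncomputable def pureClass (n : ℕ) (i j : Fin n) : Abelianization (UVP n) :=
  Abelianization.of ⟨pureGen i j, pureGen_mem_UVP i j⟩

theorem pureClass_self (i : Fin n) : pureClass n i i = 1 := by
  rw [pureClass, ← map_one Abelianization.of]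
  exact congrArg Abelianization.of (Subtype.ext (pureGen_self i))

theorem weight_pureClass_id {a : UVB n} (ha : a ∈ UVP n) :
    weight (pureClass n) a id = Abelianization.of ⟨a, ha⟩ := by
  have hmem {x : UVB n} (hx : x ∈ Subgroup.closure
      (Set.range fun p : Fin n × Fin n => pureGen p.1 p.2)) : x ∈ UVP n :=
    closure_pureGen n ▸ hx
  have ha' := ha
  rw [← closure_pureGen] at ha'
  induction ha' using Subgroup.closure_induction with
  | mem x hx =>
    obtain ⟨⟨i, j⟩, rfl⟩ := hx
    rcases eq_or_ne i j with rfl | hij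
    · change weight _ (pureGen i i) id = pureClass n i i
      rw [pureClass_self, pureGen_self, weight_one]
    · exact weight_pureGen _ hij id
  | one => exact (weight_one _ _).trans (map_one _).symm
  | mul x y hx hy ihx ihy =>
    rw [weight_mul, comp_toPerm_of_mem_UVP (hmem hx), ihx (hmem hx), ihy (hmem hy), ← map_mul]
    rfl
  | inv x hx ihx =>
    rw [weight_inv, comp_toPerm_of_mem_UVP (inv_mem (hmem hx)), ihx (hmem hx), ← map_inv]
    rfl

end PureClass

end UVB

section Colourings

variable {n : ℕ} {X : Type*}

theorem comp_viaEmbedding_eq_iff {π : Perm (Fin n)} {F : Fin (n + 1) → X} :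
    F ∘ π.viaEmbedding Fin.castSuccEmb = F ↔ (F ∘ Fin.castSucc) ∘ π = F ∘ Fin.castSucc := by
  simp only [funext_iff, Function.comp_apply, Fin.forall_fin_succ', viaEmbedding_castSucc,
    viaEmbedding_last, and_true]

theorem comp_swap_eq_iff {α : Type*} [DecidableEq α] {a b : α} {F : α → X} :
    F ∘ swap a b = F ↔ F a = F b := by
  refine ⟨fun h => ?_, fun h => funext fun x => ?_⟩
  · rw [← congrFun h a, Function.comp_apply, swap_apply_left]
  · rw [Function.comp_apply, swap_apply_def]
    split_ifs with hxa hxb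
    · rw [hxa, h]
    · rw [hxb, h]
    · rfl

theorem comp_viaEmbedding_mul_swap_eq_iff {π : Perm (Fin (n + 1))} {F : Fin (n + 2) → X} :
    F ∘ (π.viaEmbedding Fin.castSuccEmb * swap (Fin.last n).castSucc (Fin.last (n + 1)) :
        Perm (Fin (n + 2))) = F ↔
      F (Fin.last n).castSucc = F (Fin.last (n + 1)) ∧
        (F ∘ Fin.castSucc) ∘ π = F ∘ Fin.castSucc := by
  rw [← comp_viaEmbedding_eq_iff, Perm.coe_mul, ← Function.comp_assoc]
  refine ⟨fun h => ?_, fun ⟨hF, h⟩ => by rw [h, comp_swap_eq_iff.2 hF]⟩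
  have hF : F (Fin.last n).castSucc = F (Fin.last (n + 1)) := by
    rw [← congrFun h (Fin.last n).castSucc, Function.comp_apply, swap_apply_left,
      Function.comp_apply, viaEmbedding_last]
  refine ⟨hF, ?_⟩
  rw [← Equiv.eq_comp_symm, symm_swap, comp_swap_eq_iff.2 hF] at h
  exact h

theorem exists_surjective_comp_castSucc_eq {f : Fin (n + 1) → X} (hf : Function.Surjective f) :
    ∃ F : Fin (n + 2) → X, Function.Surjective F ∧
      F (Fin.last n).castSucc = F (Fin.last (n + 1)) ∧ F ∘ Fin.castSucc = f := by
  refine ⟨Fin.snoc f (f (Fin.last n)), fun x => ?_, ?_, funext fun i => ?_⟩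
  · obtain ⟨i, rfl⟩ := hf x
    exact ⟨i.castSucc, Fin.snoc_castSucc (α := fun _ => X) _ _ i⟩
  · rw [Fin.snoc_castSucc (α := fun _ => X), Fin.snoc_last]
  · exact Fin.snoc_castSucc (α := fun _ => X) _ _ i

theorem surjective_comp_castSucc {F : Fin (n + 2) → X} (hF : Function.Surjective F)
    (hlast : F (Fin.last n).castSucc = F (Fin.last (n + 1))) :
    Function.Surjective (F ∘ Fin.castSucc) := fun x => by
  obtain ⟨i, rfl⟩ := hF x
  induction i using Fin.lastCases with
  | last => exact ⟨Fin.last n, hlast⟩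
  | cast i => exact ⟨i, rfl⟩

end Colourings

section ColourWeights

variable {n : ℕ} {X M : Type*} [CommGroup M] {l : X → X → M}

/-- The weights of `x` for the colourings by all of `X` that are constant on the components of the
closure of `x`. -/
def colourWeights (l : X → X → M) (x : Σ n, UVB n) : Set M :=
  {w | ∃ f : Fin x.1 → X, Function.Surjective f ∧ f ∘ toPerm x.1 x.2 = f ∧ weight l x.2 f = w}

theorem colourWeights_subset_of_semiconjBy {a b g : UVB n} (h : SemiconjBy g a b) :
    colourWeights l ⟨n, b⟩ ⊆ colourWeights l ⟨n, a⟩ := by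
  rintro _ ⟨f, hf, hfb, rfl⟩
  refine ⟨f ∘ toPerm n g, hf.comp (toPerm n g).surjective, ?_,
    (weight_eq_of_semiconjBy l h hfb).symm⟩
  rw [Function.comp_assoc, ← Perm.coe_mul, ← map_mul, h.eq, map_mul, Perm.coe_mul,
    ← Function.comp_assoc, hfb]

theorem colourWeights_eq_of_semiconjBy {a b g : UVB n} (h : SemiconjBy g a b) :
    colourWeights l ⟨n, a⟩ = colourWeights l ⟨n, b⟩ :=
  (colourWeights_subset_of_semiconjBy h.inv_symm_left).antisymm
    (colourWeights_subset_of_semiconjBy h)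

theorem colourWeights_incl_mul {a : UVB (n + 1)} {t : UVB (n + 2)}
    (ht : toPerm (n + 2) t = swap (Fin.last n).castSucc (Fin.last (n + 1)))
    (hw : ∀ F, F (Fin.last n).castSucc = F (Fin.last (n + 1)) → weight l t F = 1) :
    colourWeights l ⟨n + 1, a⟩ = colourWeights l ⟨n + 2, incl (n + 1) a * t⟩ := by
  have hperm : toPerm (n + 2) (incl (n + 1) a * t) =
      (toPerm (n + 1) a).viaEmbedding Fin.castSuccEmb *
        swap (Fin.last n).castSucc (Fin.last (n + 1)) := by
    rw [map_mul, toPerm_incl, ht]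
  have hweight {F : Fin (n + 2) → X} (hlast : F (Fin.last n).castSucc = F (Fin.last (n + 1)))
      (hF : (F ∘ Fin.castSucc) ∘ toPerm (n + 1) a = F ∘ Fin.castSucc) :
      weight l (incl (n + 1) a * t) F = weight l a (F ∘ Fin.castSucc) := by
    rw [weight_mul, weight_incl, toPerm_incl, comp_viaEmbedding_eq_iff.2 hF, hw F hlast, mul_one]
  apply Set.Subset.antisymm
  · rintro _ ⟨f, hsurj, hf, rfl⟩
    obtain ⟨F, hFsurj, hlast, rfl⟩ := exists_surjective_comp_castSucc_eq hsurj
    exact ⟨F, hFsurj, hperm ▸ comp_viaEmbedding_mul_swap_eq_iff.2 ⟨hlast, hf⟩, hweight hlast hf⟩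
  · rintro _ ⟨F, hFsurj, hF, rfl⟩
    obtain ⟨hlast, hf⟩ := comp_viaEmbedding_mul_swap_eq_iff.1 (hperm ▸ hF)
    exact ⟨F ∘ Fin.castSucc, surjective_comp_castSucc hFsurj hlast, hf, (hweight hlast hf).symm⟩

theorem colourWeights_eq_empty [Nontrivial X] {x : Σ n, UVB n} (hx : x.1 ≤ 1) :
    colourWeights l x = ∅ := by
  have : Subsingleton (Fin x.1) := Fin.subsingleton_iff_le_one.2 hx
  exact Set.eq_empty_of_forall_notMem fun _ ⟨f, hf, _⟩ => not_subsingleton X hf.subsingleton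

theorem colourWeights_eq_of_markovBase [Nontrivial X] (hl : ∀ x, l x x = 1) {x y : Σ n, UVB n}
    (h : MarkovBase x y) : colourWeights l x = colourWeights l y := by
  have hadj (n : ℕ) : (Fin.last (n + 1) : ℕ) = (Fin.last n).castSucc + 1 := rfl
  have hweight {n : ℕ} {F : Fin (n + 2) → X}
      (hF : F (Fin.last n).castSucc = F (Fin.last (n + 1))) :
      weight l (sigma (n + 2) (n + 1)) F = 1 := by
    refine (weight_sigma l (hadj n) F).trans ?_
    rw [hF, hl, inv_one]
  rcases h with ⟨n, a, g⟩ | ⟨_ | n, a⟩ | ⟨_ | n, a⟩ | ⟨_ | n, a⟩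
  · exact colourWeights_eq_of_semiconjBy (g := g) (inv_mul_cancel_right (g * a) g).symm
  · rw [colourWeights_eq_empty (Nat.zero_le 1), colourWeights_eq_empty (le_refl 1)]
  · exact colourWeights_incl_mul (toPerm_sigma (hadj n)) fun F => hweight
  · rw [colourWeights_eq_empty (Nat.zero_le 1), colourWeights_eq_empty (le_refl 1)]
  · have hperm : toPerm (n + 2) (sigma (n + 2) (n + 1))⁻¹ =
        swap (Fin.last n).castSucc (Fin.last (n + 1)) := by
      rw [map_inv, inv_eq_iff_eq_inv, swap_inv]
      exact toPerm_sigma (hadj n)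
    refine colourWeights_incl_mul hperm fun F hF => ?_
    rw [weight_inv, hperm, comp_swap_eq_iff.2 hF, hweight hF, inv_one]
  · rw [colourWeights_eq_empty (Nat.zero_le 1), colourWeights_eq_empty (le_refl 1)]
  · refine colourWeights_incl_mul (toPerm_rho (hadj n)) fun F _ => ?_
    exact permSection_swap (hadj n) ▸ weight_permSection l _ F

theorem Markov.colourWeights_eq [Nontrivial X] (hl : ∀ x, l x x = 1) {x y : Σ n, UVB n}
    (h : Markov x y) : colourWeights l x = colourWeights l y := by
  induction h with
  | rel _ _ h => exact colourWeights_eq_of_markovBase hl h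
  | refl => rfl
  | symm _ _ _ ih => exact ih.symm
  | trans _ _ _ _ _ ih ih' => exact ih.trans ih'

end ColourWeights

section Classification

theorem abelianization_of_eq_of_iff {G : Type*} [Group G] {H : Subgroup G} {a b : H} :
    Abelianization.of a = Abelianization.of b ↔ (a * b⁻¹ : G) ∈ ⁅H, H⁆ := by
  rw [← div_eq_one, ← map_div, ← MonoidHom.mem_ker, Abelianization.ker_of,
    ← H.map_subtype_commutator, ← Subgroup.mem_map_iff_mem H.subtype_injective, div_eq_mul_inv]
  rfl

variable {n : ℕ}

theorem markov_iff (hn : 2 ≤ n) {a b : UVB n} (ha : a ∈ UVP n) (hb : b ∈ UVP n) :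
    Markov ⟨n, a⟩ ⟨n, b⟩ ↔ ∃ π : Perm (Fin n),
      permSection n π * a * (permSection n π)⁻¹ * b⁻¹ ∈ ⁅UVP n, UVP n⁆ := by
  constructor
  · intro h
    have : Nontrivial (Fin n) := Fin.nontrivial_iff_two_le.2 hn
    have hmem : weight (pureClass n) b id ∈ colourWeights (pureClass n) ⟨n, a⟩ := by
      rw [h.colourWeights_eq pureClass_self]
      exact ⟨id, Function.surjective_id, comp_toPerm_of_mem_UVP hb id, rfl⟩
    obtain ⟨f, hf, -, hw⟩ := hmem
    let π := Equiv.ofBijective f (Finite.surjective_iff_bijective.1 hf)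
    let c := permSection n π * a * (permSection n π)⁻¹
    have hc : c ∈ UVP n := (toPerm n).normal_ker.conj_mem a ha _
    have hsemiconj : SemiconjBy (permSection n π) a c := (inv_mul_cancel_right _ _).symm
    refine ⟨π, abelianization_of_eq_of_iff (a := ⟨c, hc⟩) (b := ⟨b, hb⟩).1 ?_⟩
    calc Abelianization.of ⟨c, hc⟩ = weight (pureClass n) c id := (weight_pureClass_id hc).symm
      _ = weight (pureClass n) a (id ∘ toPerm n (permSection n π)) :=
        weight_eq_of_semiconjBy _ hsemiconj (comp_toPerm_of_mem_UVP hc id)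
      _ = weight (pureClass n) a f := by rw [toPerm_permSection]; rfl
      _ = weight (pureClass n) b id := hw
      _ = Abelianization.of ⟨b, hb⟩ := weight_pureClass_id hb
  · rintro ⟨π, h⟩
    exact (Markov.of_isConj (isConj_iff.2 ⟨_, rfl⟩)).trans (Markov.of_mul_inv_mem_commutator hb h)

end Classification

/-! ## Statement 13 -/

/-- classification of n-component fused links.  For `n ≥ 2`, the
identity on `UVP n` induces a well-defined bijection from the set of fused Markov
equivalence classes of elements of `UVP n` onto the set of classes of elements of
`UVP n` under the relation "the images in the abelianization `UVP n/[UVP n, UVP n]`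
are conjugate by an element of `S_n ≤ UVB n`" (i.e. the orbits of the `S_n`-action on
the abelianization). -/
theorem statement13 (n : ℕ) (hn : 2 ≤ n)
    (ι : UVB n →* Equiv.Perm (Fin n)) (hι : IsIota n ι)
    (s : Equiv.Perm (Fin n) →* UVB n) (hs : IsPermSection n s) :
    ∃ F : Quot (fun a b : ↥ι.ker => Markov ⟨n, (a : UVB n)⟩ ⟨n, (b : UVB n)⟩) →
          Quot (fun a b : ↥ι.ker => ∃ π : Equiv.Perm (Fin n),
            s π * (a : UVB n) * (s π)⁻¹ * ((b : UVB n))⁻¹ ∈ ⁅ι.ker, ι.ker⁆),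
      (∀ a : ↥ι.ker, F (Quot.mk _ a) = Quot.mk _ a) ∧ Function.Bijective F := by
  obtain rfl := hι.eq_toPerm
  obtain rfl := hs.eq_permSection
  exact ⟨Quot.congrRight fun a b => markov_iff hn a.2 b.2, fun _ => rfl, Equiv.bijective _⟩
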